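/- arXiv:2512.23403 — 7 statements merged into one kernel-verified Lean document; each statement's English description precedes it below -/
import Mathlib

section
/- Let A be an r-register finite-memory automaton over an infinite alphabet Σ with state set S and distinguished letters Δ. Then for every word σ ∈ L(A) and every decomposition σ = ψχω with |χ| > card(S), there exist a decomposition χ = τυφ and a Δ-permutation α of Σ of order at most (2r)! such that: 0 < |υ| ≤ card(S); for every k ≥ 1, the word ψ τ υ α(υ) α²(υ) ⋯ α^k(υ) α^k(φω) belongs to L(A); and the word ψ τ α⁻¹(φω) belongs to L(A). -/
/-- An `r`-register finite-memory automaton over the alphabet `Sigma`,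
with states `S`. -/
structure FMA (Sigma : Type) (S : Type) (r : ℕ) where
  s0 : S
  F : Set S
  Δ : Finset Sigma
  θ0 : Fin r → Sigma
  θ0_notin : ∀ i, θ0 i ∉ Δ
  θ0_inj : Function.Injective θ0
  δΔ : S → Sigma → Set S
  δeq : S → Fin r → Set S
  δskip : S → Set S
  δrepl : S → Set (S × Fin r)

namespace FMA

variable {Sigma S : Type} {r : ℕ}

/-- One step of the automaton on letter `σ`, from configuration `c` to `c'`. -/
def Step (A : FMA Sigma S r) (c : S × (Fin r → Sigma)) (σ : Sigma)
    (c' : S × (Fin r → Sigma)) : Prop :=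
  (σ ∈ A.Δ ∧ c'.1 ∈ A.δΔ c.1 σ ∧ c'.2 = c.2) ∨
  (∃ i, σ = c.2 i ∧ c'.1 ∈ A.δeq c.1 i ∧ c'.2 = c.2) ∨
  (σ ∉ A.Δ ∧ (∀ i, σ ≠ c.2 i) ∧
    ((c'.1 ∈ A.δskip c.1 ∧ c'.2 = c.2) ∨
     (∃ i, (c'.1, i) ∈ A.δrepl c.1 ∧ c'.2 = Function.update c.2 i σ)))

/-- `Steps A c w c'` : reading the word `w` from configuration `c`
the automaton can reach configuration `c'`. -/
inductive Steps (A : FMA Sigma S r) :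
    S × (Fin r → Sigma) → List Sigma → S × (Fin r → Sigma) → Prop
  | nil (c) : Steps A c [] c
  | cons {c c' c'' σ w} : A.Step c σ c' → Steps A c' w c'' → Steps A c (σ :: w) c''

/-- The language accepted by `A`. -/
def Lang (A : FMA Sigma S r) : Set (List Sigma) :=
  {w | ∃ c, A.Steps (A.s0, A.θ0) w c ∧ c.1 ∈ A.F}

end FMA

/-- A `Δ`-permutation of the alphabet: a bijection fixing every distinguished letter. -/
def IsDeltaPerm {Sigma : Type} (Δ : Finset Sigma) (α : Equiv.Perm Sigma) : Prop :=
  ∀ δ ∈ Δ, α δ = δ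

namespace FMA

variable {Sigma S : Type} {r : ℕ}

theorem Steps.append {A : FMA Sigma S r} {c d e u v} (h : A.Steps c u d)
    (h' : A.Steps d v e) : A.Steps c (u ++ v) e := by
  induction h with
  | nil c => exact h'
  | cons a _ ih => exact Steps.cons a (ih h')

theorem Steps.split {A : FMA Sigma S r} {c e : S × (Fin r → Sigma)} {u v : List Sigma}
    (h : A.Steps c (u ++ v) e) : ∃ d, A.Steps c u d ∧ A.Steps d v e := by
  induction u generalizing c with
  | nil => exact ⟨c, Steps.nil c, h⟩
  | cons a u ih =>
    rw [List.cons_append] at h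
    cases h with
    | cons h1 h2 =>
      obtain ⟨d, h3, h4⟩ := ih h2
      exact ⟨d, Steps.cons h1 h3, h4⟩

/-- Register contents are distinct and avoid the distinguished letters. -/
def Good (A : FMA Sigma S r) (c : S × (Fin r → Sigma)) : Prop :=
  Function.Injective c.2 ∧ ∀ i, c.2 i ∉ A.Δ

theorem Step.good {A : FMA Sigma S r} {c d : S × (Fin r → Sigma)} {a : Sigma}
    (h : A.Step c a d) (hc : A.Good c) : A.Good d := by
  obtain ⟨h1, h2⟩ := hc
  rcases h with ⟨-, -, h⟩ | ⟨i, -, -, h⟩ | ⟨ha, hn, ⟨-, h⟩ | ⟨i, -, h⟩⟩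
  · exact ⟨h ▸ h1, h ▸ h2⟩
  · exact ⟨h ▸ h1, h ▸ h2⟩
  · exact ⟨h ▸ h1, h ▸ h2⟩
  · refine ⟨?_, ?_⟩
    · rw [h]
      intro x y hxy
      have hxy' := @h1 x y
      simp only [Function.update_apply] at hxy
      grind
    · rw [h]
      intro x
      have := h2 x
      simp only [Function.update_apply]
      grind

theorem Steps.good {A : FMA Sigma S r} {c d : S × (Fin r → Sigma)} {w : List Sigma}
    (h : A.Steps c w d) (hc : A.Good c) : A.Good d := by
  induction h with
  | nil c => exact hc
  | cons a _ ih => exact ih (a.good hc)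

theorem Step.equiv {A : FMA Sigma S r} {c d : S × (Fin r → Sigma)} {a : Sigma}
    (h : A.Step c a d) (α : Equiv.Perm Sigma) (hα : IsDeltaPerm A.Δ α) :
    A.Step (c.1, α ∘ c.2) (α a) (d.1, α ∘ d.2) := by
  have key : a ∉ A.Δ → α a ∉ A.Δ := by
    intro ha h'
    have := α.injective (hα _ h')
    rw [this] at h'
    exact ha h'
  rcases h with ⟨h1, h2, h⟩ | ⟨i, h1, h2, h⟩ | ⟨ha, hn, ⟨h2, h⟩ | ⟨i, h2, h⟩⟩
  · left
    rw [hα a h1]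
    exact ⟨h1, h2, by simp [h]⟩
  · right; left
    exact ⟨i, by simp [h1], h2, by simp [h]⟩
  · right; right
    exact ⟨key ha, fun i hi => hn i (α.injective hi), Or.inl ⟨h2, by simp [h]⟩⟩
  · right; right
    exact ⟨key ha, fun i hi => hn i (α.injective hi), Or.inr ⟨i, h2, by
      simp [h, Function.comp_update]⟩⟩

theorem Steps.equiv {A : FMA Sigma S r} {c d : S × (Fin r → Sigma)} {w : List Sigma}
    (h : A.Steps c w d) (α : Equiv.Perm Sigma) (hα : IsDeltaPerm A.Δ α) :
    A.Steps (c.1, α ∘ c.2) (w.map α) (d.1, α ∘ d.2) := by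
  induction h with
  | nil c => exact Steps.nil _
  | cons a _ ih => exact Steps.cons (a.equiv α hα) ih

theorem Steps.run {A : FMA Sigma S r} {c d : S × (Fin r → Sigma)} {w : List Sigma}
    (h : A.Steps c w d) : ∃ f : ℕ → S × (Fin r → Sigma), f 0 = c ∧ f w.length = d ∧
      ∀ i (hi : i < w.length), A.Step (f i) w[i] (f (i + 1)) := by
  induction h with
  | nil c => exact ⟨fun _ => c, rfl, rfl, by simp⟩
  | @cons c c' c'' σ w a _ ih =>
    obtain ⟨f, h0, h1, h2⟩ := ih
    refine ⟨fun n => Nat.casesOn n c f, rfl, h1, ?_⟩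
    intro i hi
    cases i with
    | zero => simpa [h0] using a
    | succ i => simpa using h2 i (by simpa using hi)

theorem run_steps {A : FMA Sigma S r} {w : List Sigma} {f : ℕ → S × (Fin r → Sigma)}
    (h : ∀ i (hi : i < w.length), A.Step (f i) w[i] (f (i + 1))) (n i : ℕ)
    (hn : i + n ≤ w.length) : A.Steps (f i) ((w.drop i).take n) (f (i + n)) := by
  induction n generalizing i with
  | zero => simpa using Steps.nil _
  | succ n ih =>
    have hi : i < w.length := by omega
    rw [List.drop_eq_getElem_cons hi, List.take_succ_cons]
    have := ih (i + 1) (by omega)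
    rw [show i + 1 + n = i + (n + 1) by omega] at this
    exact Steps.cons (h i hi) this

theorem Steps.pigeon [Fintype S] {A : FMA Sigma S r} {c d : S × (Fin r → Sigma)}
    {w : List Sigma} (h : A.Steps c w d) (hl : Fintype.card S < w.length) :
    ∃ (τ υ φ : List Sigma) (s : S) (θ θ' : Fin r → Sigma), w = τ ++ υ ++ φ ∧
      0 < υ.length ∧ υ.length ≤ Fintype.card S ∧
      A.Steps c τ (s, θ) ∧ A.Steps (s, θ) υ (s, θ') ∧ A.Steps (s, θ') φ d := by
  obtain ⟨f, h0, h1, h2⟩ := h.run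
  obtain ⟨i, j, hij, hf⟩ : ∃ i j : Fin (Fintype.card S + 1), i < j ∧ (f i).1 = (f j).1 := by
    obtain ⟨i, j, hne, hf⟩ := Fintype.exists_ne_map_eq_of_card_lt
      (fun i : Fin (Fintype.card S + 1) => (f i).1) (by simp)
    rcases lt_or_gt_of_ne hne with h | h
    · exact ⟨i, j, h, hf⟩
    · exact ⟨j, i, h, hf.symm⟩
  have hij' : (i : ℕ) < j := hij
  have hj := j.2
  have s1 := run_steps h2 i 0 (by omega)
  have s2 := run_steps h2 (j - i) i (by omega)
  have s3 := run_steps h2 (w.length - j) j (by omega)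
  rw [Nat.zero_add, h0] at s1
  rw [show (i : ℕ) + (j - i) = j by omega] at s2
  rw [show (j : ℕ) + (w.length - j) = w.length by omega, h1] at s3
  refine ⟨(w.drop 0).take i, (w.drop i).take (j - i), (w.drop j).take (w.length - j), (f i).1, (f i).2, (f j).2, ?_, ?_, ?_, s1, ?_, ?_⟩
  · rw [List.drop_zero, List.take_of_length_le (l := w.drop j) (by simp),
      List.append_assoc]
    conv_lhs => rw [← List.take_append_drop i w, ← List.take_append_drop (j - i) (w.drop i)]
    rw [List.drop_drop, show (i : ℕ) + (j - i) = j by omega]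
  · simp; omega
  · simp; omega
  · have e : ((f i).1, (f j).2) = f j := by rw [hf]
    rw [e]; exact s2
  · rw [hf]; exact s3

theorem exists_perm (Δ : Finset Sigma) (θ θ' : Fin r → Sigma)
    (h : Function.Injective θ) (h' : Function.Injective θ')
    (hd : ∀ i, θ i ∉ Δ) (hd' : ∀ i, θ' i ∉ Δ) :
    ∃ α : Equiv.Perm Sigma, IsDeltaPerm Δ α ∧ 0 < orderOf α ∧
      orderOf α ≤ (2 * r).factorial ∧ α ∘ θ = θ' := by
  classical
  let T : Finset Sigma := Finset.univ.image θ ∪ Finset.univ.image θ'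
  have hT : T.card ≤ 2 * r := by
    have h1 := Finset.card_union_le (Finset.univ.image θ) (Finset.univ.image θ')
    have h2 := Finset.card_image_le (s := Finset.univ) (f := θ)
    have h3 := Finset.card_image_le (s := Finset.univ) (f := θ')
    simp only [Finset.card_univ, Fintype.card_fin] at h2 h3
    show (Finset.univ.image θ ∪ Finset.univ.image θ').card ≤ _
    omega
  let x : Fin r ↪ {a // a ∈ T} := ⟨fun i => ⟨θ i, by simp [T]⟩, fun i j hij => h (by simpa using hij)⟩
  let y : Fin r ↪ {a // a ∈ T} := ⟨fun i => ⟨θ' i, by simp [T]⟩, fun i j hij => h' (by simpa using hij)⟩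
  obtain ⟨g, hg⟩ := (Equiv.Perm.isMultiplyPretransitive {a // a ∈ T} r).exists_smul_eq x y
  have ho : orderOf (Equiv.Perm.ofSubtype g) = orderOf g :=
    orderOf_injective Equiv.Perm.ofSubtype Equiv.Perm.ofSubtype_injective g
  refine ⟨Equiv.Perm.ofSubtype g, ?_, ?_, ?_, ?_⟩
  · intro δ hδ
    apply Equiv.Perm.ofSubtype_apply_of_not_mem
    simp only [T, Finset.mem_union, Finset.mem_image, Finset.mem_univ, true_and]
    rintro (⟨i, rfl⟩ | ⟨i, rfl⟩)
    · exact hd i hδ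
    · exact hd' i hδ
  · rw [ho]; exact orderOf_pos g
  · rw [ho]
    refine (orderOf_le_card_univ).trans ?_
    rw [Fintype.card_perm, Fintype.card_coe]
    exact Nat.factorial_le hT
  · funext i
    have := congrArg (fun e : Fin r ↪ {a // a ∈ T} => (e i : Sigma)) hg
    have h2 := Equiv.Perm.ofSubtype_apply_coe g (x i)
    exact h2.trans this

theorem isDeltaPerm_pow {Δ : Finset Sigma} {α : Equiv.Perm Sigma} (h : IsDeltaPerm Δ α)
    (k : ℕ) : IsDeltaPerm Δ (α ^ k) := by
  intro δ hδ
  induction k with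
  | zero => rfl
  | succ k ih => rw [pow_succ, Equiv.Perm.mul_apply, h δ hδ, ih]

end FMA

/-- Pumping lemma for `r`-register finite-memory automata
(Theorem `Pumping_Lemma_2`): every subword `χ` of an accepted word `ψχω`
with `|χ| > card S` can be decomposed as `χ = τυφ` and pumped by a
`Δ`-permutation `α` of order at most `(2r)!`. -/
theorem fma_pumping {Sigma S : Type} [Infinite Sigma] [Fintype S] {r : ℕ}
    (A : FMA Sigma S r) (ψ χ ω : List Sigma)
    (hmem : ψ ++ χ ++ ω ∈ A.Lang) (hlen : Fintype.card S < χ.length) :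
    ∃ (τ υ φ : List Sigma) (α : Equiv.Perm Sigma),
      χ = τ ++ υ ++ φ ∧ IsDeltaPerm A.Δ α ∧
      0 < orderOf α ∧ orderOf α ≤ (2 * r).factorial ∧
      0 < υ.length ∧ υ.length ≤ Fintype.card S ∧
      (∀ k : ℕ, 1 ≤ k →
        ψ ++ τ ++ υ ++ ((List.range k).flatMap fun i => υ.map ⇑(α ^ (i + 1))) ++
          ((φ ++ ω).map ⇑(α ^ k)) ∈ A.Lang) ∧
      ψ ++ τ ++ ((φ ++ ω).map ⇑α⁻¹) ∈ A.Lang := by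
  obtain ⟨f, hf, hF⟩ := hmem
  obtain ⟨c2, hf, h3⟩ := hf.split
  obtain ⟨c1, h1, h2⟩ := hf.split
  obtain ⟨τ, υ, φ, s, θ, θ', hχ, hp, hl, hτ, hυ, hφ⟩ := h2.pigeon hlen
  have g0 : A.Good (A.s0, A.θ0) := ⟨A.θ0_inj, A.θ0_notin⟩
  have pre := h1.append hτ
  have g1 := pre.good g0
  have g2 := hυ.good g1
  obtain ⟨α, hα, ho, ho', hθ⟩ := FMA.exists_perm A.Δ θ θ' g1.1 g2.1 g1.2 g2.2
  have post := hφ.append h3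
  subst hθ
  refine ⟨τ, υ, φ, α, hχ, hα, ho, ho', hp, hl, ?_, ?_⟩
  · intro k _
    have loop : ∀ k : ℕ, A.Steps (A.s0, A.θ0)
        (ψ ++ τ ++ υ ++ ((List.range k).flatMap fun i => υ.map ⇑(α ^ (i + 1))))
        (s, ⇑(α ^ (k + 1)) ∘ θ) := by
      intro k
      induction k with
      | zero => simpa using pre.append hυ
      | succ k ih =>
        rw [List.range_succ, List.flatMap_append, ← List.append_assoc]
        refine ih.append ?_
        have := hυ.equiv (α ^ (k + 1)) (FMA.isDeltaPerm_pow hα _)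
        simpa [pow_succ, Function.comp_assoc, Equiv.Perm.coe_mul] using this
    refine ⟨(f.1, ⇑(α ^ k) ∘ f.2), (loop k).append ?_, ?_⟩
    · have := post.equiv (α ^ k) (FMA.isDeltaPerm_pow hα _)
      simpa [pow_succ, Function.comp_assoc, Equiv.Perm.coe_mul] using this
    · exact hF
  · have hα' : IsDeltaPerm A.Δ α⁻¹ := fun δ hδ => by
      rw [Equiv.Perm.inv_eq_iff_eq, hα δ hδ]
    have := post.equiv α⁻¹ hα'
    have e : ⇑α⁻¹ ∘ (⇑α ∘ θ) = θ := by
      funext i; simp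
    simp only [e] at this
    exact ⟨_, pre.append this, hF⟩
end

section
/- If L is an unbounded quasi-regular language over an infinite alphabet Σ, then there exist words σ′, σ″, σ‴ over Σ with σ″ nonempty such that σ′ (σ″)^k σ‴ ∈ L for every k = 0,1,2,…. -/
/-- The restriction of `A` to a finite subalphabet `D`, as an ordinary NFA. -/
def fmaRestrict {Sigma S : Type} {r : ℕ} (A : FMA Sigma S r) (D : Finset Sigma)
    (t0 : Fin r → D) : NFA D (S × (Fin r → D)) where
  step c σ := {c' | A.Step (c.1, fun i => (c.2 i : Sigma)) σ (c'.1, fun i => (c'.2 i : Sigma))}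
  start := {(A.s0, t0)}
  accept := {c | c.1 ∈ A.F}

theorem fmaRestrict_steps {Sigma S : Type} {r : ℕ} (A : FMA Sigma S r) (D : Finset Sigma)
    (t0 : Fin r → D) (w : List D) : ∀ c c' : S × (Fin r → D),
    c' ∈ (fmaRestrict A D t0).evalFrom {c} w →
      A.Steps (c.1, fun i => (c.2 i : Sigma)) (w.map Subtype.val)
        (c'.1, fun i => (c'.2 i : Sigma)) := by
  induction w with
  | nil =>
    intro c c' h
    simp only [NFA.evalFrom_nil, Set.mem_singleton_iff] at h
    subst h
    exact FMA.Steps.nil _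
  | cons a w ih =>
    intro c c' h
    rw [NFA.evalFrom_cons, NFA.stepSet_singleton, NFA.mem_evalFrom_iff_exists] at h
    obtain ⟨d, hd, h⟩ := h
    exact FMA.Steps.cons hd (ih d c' h)

theorem fmaRestrict_exists {Sigma S : Type} {r : ℕ} (A : FMA Sigma S r) (D : Finset Sigma)
    (t0 : Fin r → D) (hD : A.Δ ⊆ D) (hcard : A.Δ.card + r < D.card)
    {c : S × (Fin r → Sigma)} {w : List Sigma} {c' : S × (Fin r → Sigma)}
    (h : A.Steps c w c') : ∀ θ : Fin r → D, ∃ (v : List D) (θ' : Fin r → D),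
      v.length = w.length ∧ (c'.1, θ') ∈ (fmaRestrict A D t0).evalFrom {(c.1, θ)} v := by
  classical
  induction h with
  | nil c => exact fun θ => ⟨[], θ, rfl, by simp⟩
  | @cons c d e σ w hs _ ih =>
    intro θ
    obtain ⟨a, η, hη⟩ : ∃ (a : D) (η : Fin r → D),
        A.Step (c.1, fun i => (θ i : Sigma)) a (d.1, fun i => (η i : Sigma)) := by
      rcases hs with ⟨h1, h2, _⟩ | ⟨i, _, h2, _⟩ | ⟨_, _, h⟩
      · exact ⟨⟨σ, hD h1⟩, θ, Or.inl ⟨h1, h2, rfl⟩⟩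
      · exact ⟨θ i, θ, Or.inr (Or.inl ⟨i, rfl, h2, rfl⟩)⟩
      · obtain ⟨a, haD, ha⟩ : ∃ a ∈ D,
            a ∉ A.Δ ∪ Finset.univ.image (fun i => (θ i : Sigma)) := by
          apply Finset.exists_mem_notMem_of_card_lt_card
          have h1 := Finset.card_union_le A.Δ (Finset.univ.image (fun i => (θ i : Sigma)))
          have h2 : (Finset.univ.image (fun i => (θ i : Sigma))).card ≤ r := by
            simpa using Finset.card_image_le (s := (Finset.univ : Finset (Fin r)))
              (f := fun i => (θ i : Sigma))
          omega
        have ha1 : a ∉ A.Δ := fun h => ha (Finset.mem_union_left _ h)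
        have ha2 : ∀ i, a ≠ (θ i : Sigma) := fun i h =>
          ha (Finset.mem_union_right _ (Finset.mem_image.2 ⟨i, Finset.mem_univ _, h.symm⟩))
        rcases h with ⟨h, _⟩ | ⟨i, h, _⟩
        · exact ⟨⟨a, haD⟩, θ, Or.inr (Or.inr ⟨ha1, ha2, Or.inl ⟨h, rfl⟩⟩)⟩
        · refine ⟨⟨a, haD⟩, Function.update θ i ⟨a, haD⟩,
            Or.inr (Or.inr ⟨ha1, ha2, Or.inr ⟨i, h, ?_⟩⟩)⟩
          funext j
          by_cases hj : j = i
          · subst hj; simp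
          · simp [hj]
    obtain ⟨v, θ', hv, hm⟩ := ih η
    refine ⟨a :: v, θ', by simp [hv], ?_⟩
    rw [NFA.evalFrom_cons, NFA.stepSet_singleton, NFA.mem_evalFrom_iff_exists]
    exact ⟨(d.1, η), hη, hm⟩

/-- Periodicity in unbounded quasi-regular languages: if `L` is accepted by some
finite-memory automaton and contains arbitrarily long words, then some word of
the form `σ' (σ'')^k σ'''` with `σ''` nonempty lies in `L` for every `k`. -/
theorem quasi_regular_periodicity {Sigma : Type} [Infinite Sigma]
    (L : Set (List Sigma))
    (hqr : ∃ (S : Type) (_ : Fintype S) (r : ℕ) (A : FMA Sigma S r), A.Lang = L)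
    (hub : ∀ n : ℕ, ∃ w ∈ L, n < w.length) :
    ∃ σ' σ'' σ''' : List Sigma, σ'' ≠ [] ∧
      ∀ k : ℕ, σ' ++ (List.replicate k σ'').flatten ++ σ''' ∈ L := by
  classical
  obtain ⟨S, _, r, A, rfl⟩ := hqr
  obtain ⟨D, hsub, hcard⟩ := Infinite.exists_superset_card_eq
    (A.Δ ∪ Finset.univ.image A.θ0)
    ((A.Δ ∪ Finset.univ.image A.θ0).card + (A.Δ.card + r + 1)) (by omega)
  have hD : A.Δ ⊆ D := Finset.subset_union_left.trans hsub
  have hc : A.Δ.card + r < D.card := by omega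
  let t0 : Fin r → D := fun i => ⟨A.θ0 i, hsub (Finset.mem_union_right _
    (Finset.mem_image.2 ⟨i, Finset.mem_univ _, rfl⟩))⟩
  obtain ⟨w, ⟨c, hw, hcF⟩, hlen⟩ := hub (Fintype.card (Set (S × (Fin r → D))))
  obtain ⟨v, θ', hv, hm⟩ := fmaRestrict_exists A D t0 hD hc hw t0
  have hacc : v ∈ (fmaRestrict A D t0).accepts := ⟨(c.1, θ'), hcF, hm⟩
  obtain ⟨x, y, z, _, _, hy, hpump⟩ := NFA.pumping_lemma hacc (by omega)
  refine ⟨x.map Subtype.val, y.map Subtype.val, z.map Subtype.val, fun h => hy (List.map_eq_nil_iff.1 h), ?_⟩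
  intro k
  have hk : x ++ (List.replicate k y).flatten ++ z ∈ (fmaRestrict A D t0).accepts := by
    apply hpump
    refine Language.append_mem_mul (Language.append_mem_mul rfl ?_) rfl
    exact Language.join_mem_kstar fun u hu => List.eq_of_mem_replicate hu
  obtain ⟨q, hqF, hq⟩ := hk
  have := fmaRestrict_steps A D t0 _ _ _ hq
  rw [List.map_append, List.map_append, List.map_flatten, List.map_replicate] at this
  exact ⟨(q.1, fun i => (q.2 i : Sigma)), this, hqF⟩
end

section
/- Let A be a one-register alternating finite-memory automaton over an infinite alphabet Σ with distinguished letters Δ. There is a constant N_A (depending only on A) such that for every word σ ∈ L(A) with |σ| > N_A there exist a decomposition σ = τυφ and a Δ-permutation α of Σ such that |υφ| ≤ N_A, |υ| > 0, and for every k ≥ 1 the word τ υ α(υ) α²(υ) ⋯ α^k(υ) α^k(φ) belongs to L(A). -/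
/-- A one-register alternating finite-memory automaton over the alphabet `Sigma`,
with states `S`. -/
structure AFMA (Sigma : Type) (S : Type) where
  s0 : S
  F : Set S
  Δ : Finset Sigma
  θ0 : Sigma
  θ0_notin : θ0 ∉ Δ
  μΔ : S → Sigma → Set (Set S)
  μeq : S → Set (Set S)
  μne : S → Set (Set S × Set S)

namespace AFMA

variable {Sigma S : Type}

open Classical

/-- The induced transition function `μ^c` on a configuration `c` and a letter `σ`:
a set of sets of configurations. -/
noncomputable def muC (A : AFMA Sigma S) (c : S × Sigma) (σ : Sigma) : Set (Set (S × Sigma)) :=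
  if σ ∈ A.Δ then {D | ∃ Q ∈ A.μΔ c.1 σ, D = Q ×ˢ ({c.2} : Set Sigma)}
  else if σ = c.2 then {D | ∃ Q ∈ A.μeq c.1, D = Q ×ˢ ({c.2} : Set Sigma)}
  else {D | ∃ p ∈ A.μne c.1, D = p.1 ×ˢ ({c.2} : Set Sigma) ∪ p.2 ×ˢ ({σ} : Set Sigma)}

/-- `SetStep A C σ C'` : `C' ∈ μ^c(C, σ)`, i.e. `C'` is a union, over all `c ∈ C`,
of chosen elements of `μ^c(c, σ)`. -/
def SetStep (A : AFMA Sigma S) (C : Set (S × Sigma)) (σ : Sigma)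
    (C' : Set (S × Sigma)) : Prop :=
  ∃ g : S × Sigma → Set (S × Sigma),
    (∀ c ∈ C, g c ∈ A.muC c σ) ∧ C' = ⋃ c ∈ C, g c

/-- `Steps A C w C'` : reading the word `w` from the configuration set `C`
the automaton can reach the configuration set `C'`. -/
inductive Steps (A : AFMA Sigma S) :
    Set (S × Sigma) → List Sigma → Set (S × Sigma) → Prop
  | nil (C) : Steps A C [] C
  | cons {C C' C'' σ w} : A.SetStep C σ C' → Steps A C' w C'' → Steps A C (σ :: w) C''

def Accepting (A : AFMA Sigma S) (C : Set (S × Sigma)) : Prop :=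
  ∀ c ∈ C, c.1 ∈ A.F

/-- The language accepted by `A`. -/
def Lang (A : AFMA Sigma S) : Set (List Sigma) :=
  {w | ∃ C, A.Steps {(A.s0, A.θ0)} w C ∧ A.Accepting C}

/-- The action of a permutation of the alphabet on a set of configurations. -/
def mapConfigs (α : Equiv.Perm Sigma) (C : Set (S × Sigma)) : Set (S × Sigma) :=
  (fun c => (c.1, α c.2)) '' C

end AFMA

namespace AFMA

variable {Sigma S : Type}

/-- Acceptance of a word from a single configuration. -/
def acc (A : AFMA Sigma S) : List Sigma → S × Sigma → Prop
  | [], c => c.1 ∈ A.F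
  | σ :: v, c => ∃ D ∈ A.muC c σ, ∀ d ∈ D, acc A v d

theorem steps_iff_acc (A : AFMA Sigma S) (w : List Sigma) : ∀ C : Set (S × Sigma),
    (∃ C', A.Steps C w C' ∧ A.Accepting C') ↔ ∀ c ∈ C, A.acc w c := by
  induction w with
  | nil =>
    intro C
    constructor
    · rintro ⟨C', h, h'⟩
      cases h
      exact h'
    · intro h
      exact ⟨C, Steps.nil C, h⟩
  | cons σ v ih =>
    intro C
    constructor
    · rintro ⟨C'', h, h'⟩ c hc
      cases h with
      | cons hs hst =>
        rename_i C'
        obtain ⟨g, hg, rfl⟩ := hs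
        have := (ih _).1 ⟨C'', hst, h'⟩
        refine ⟨g c, hg c hc, fun d hd => this d ?_⟩
        simp only [Set.mem_iUnion]
        exact ⟨c, hc, hd⟩
    · intro h
      classical
      choose! g hg using h
      have : ∀ d ∈ ⋃ c ∈ C, g c, A.acc v d := by
        intro d hd
        simp only [Set.mem_iUnion] at hd
        obtain ⟨c, hc, hd⟩ := hd
        exact (hg c hc).2 d hd
      obtain ⟨C', h1, h2⟩ := (ih _).2 this
      exact ⟨C', Steps.cons ⟨g, fun c hc => (hg c hc).1, rfl⟩ h1, h2⟩

theorem mem_lang_iff (A : AFMA Sigma S) (w : List Sigma) :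
    w ∈ A.Lang ↔ A.acc w (A.s0, A.θ0) := by
  have := A.steps_iff_acc w {(A.s0, A.θ0)}
  simpa [Lang] using this

theorem mem_delta_iff {Δ : Finset Sigma} {α : Equiv.Perm Sigma} (h : IsDeltaPerm Δ α) (x : Sigma) :
    α x ∈ Δ ↔ x ∈ Δ := by
  constructor
  · intro hx
    have := h _ hx
    rwa [← α.injective this]
  · intro hx
    rwa [h _ hx]

theorem IsDeltaPerm_inv {Δ : Finset Sigma} {α : Equiv.Perm Sigma} (h : IsDeltaPerm Δ α) :
    IsDeltaPerm Δ α⁻¹ := by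
  intro δ hδ
  rw [Equiv.Perm.inv_eq_iff_eq, h δ hδ]

theorem acc_map_aux (A : AFMA Sigma S) {α : Equiv.Perm Sigma} (h : IsDeltaPerm A.Δ α)
    (v : List Sigma) : ∀ s θ, A.acc v (s, θ) → A.acc (v.map α) (s, α θ) := by
  induction v with
  | nil => intro s θ h; exact h
  | cons σ v ih =>
    rintro s θ ⟨D, hD, hacc⟩
    unfold muC at hD
    have m1 := mem_delta_iff h σ
    have m2 : α σ = α θ ↔ σ = θ := α.injective.eq_iff
    simp only [List.map_cons, acc, muC]
    split_ifs at hD with h1 h2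
    · obtain ⟨Q, hQ, rfl⟩ := hD
      rw [if_pos (m1.2 h1)]
      refine ⟨_, ⟨Q, by rwa [h _ h1], rfl⟩, ?_⟩
      rintro ⟨t, x⟩ ⟨ht, hx⟩
      cases hx
      exact ih _ _ (hacc _ ⟨ht, rfl⟩)
    · obtain ⟨Q, hQ, rfl⟩ := hD
      rw [if_neg (mt m1.1 h1), if_pos (m2.2 h2)]
      refine ⟨_, ⟨Q, hQ, rfl⟩, ?_⟩
      rintro ⟨t, x⟩ ⟨ht, hx⟩
      cases hx
      exact ih _ _ (hacc _ ⟨ht, rfl⟩)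
    · obtain ⟨Q, hQ, rfl⟩ := hD
      rw [if_neg (mt m1.1 h1), if_neg (mt m2.1 h2)]
      refine ⟨_, ⟨Q, hQ, rfl⟩, ?_⟩
      rintro ⟨t, x⟩ (⟨ht, hx⟩ | ⟨ht, hx⟩)
      · cases hx
        exact ih _ _ (hacc _ (Or.inl ⟨ht, rfl⟩))
      · cases hx
        exact ih _ _ (hacc _ (Or.inr ⟨ht, rfl⟩))

theorem acc_map (A : AFMA Sigma S) {α : Equiv.Perm Sigma} (h : IsDeltaPerm A.Δ α)
    (v : List Sigma) (s θ) : A.acc (v.map α) (s, α θ) ↔ A.acc v (s, θ) := by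
  constructor
  · intro h'
    have := A.acc_map_aux (IsDeltaPerm_inv h) _ _ _ h'
    simpa [List.map_map, Function.comp_def] using this
  · exact A.acc_map_aux h v s θ

/-- Monotonicity of acceptance, relative to a set `T` of letters. -/
theorem acc_mono (A : AFMA Sigma S) (T : Set Sigma) (v v' : List Sigma)
    (h : ∀ s, ∀ θ ∈ T, θ ∉ A.Δ → A.acc v (s, θ) → A.acc v' (s, θ)) (u : List Sigma)
    (hu : ∀ x ∈ u, x ∈ T) :
    ∀ s, ∀ θ ∈ T, θ ∉ A.Δ → A.acc (u ++ v) (s, θ) → A.acc (u ++ v') (s, θ) := by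
  induction u with
  | nil => exact h
  | cons σ u ih =>
    have ih := ih (fun x hx => hu x (List.mem_cons_of_mem _ hx))
    rintro s θ hT hΔ ⟨D, hD, hacc⟩
    refine ⟨D, hD, ?_⟩
    rintro ⟨t, x⟩ hd
    have hx : x ∈ T ∧ x ∉ A.Δ := by
      unfold muC at hD
      split_ifs at hD with h1 h2
      · obtain ⟨Q, hQ, rfl⟩ := hD
        cases hd.2
        exact ⟨hT, hΔ⟩
      · obtain ⟨Q, hQ, rfl⟩ := hD
        cases hd.2
        exact ⟨hT, hΔ⟩
      · obtain ⟨Q, hQ, rfl⟩ := hD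
        rcases hd with hd | hd
        · cases hd.2
          exact ⟨hT, hΔ⟩
        · cases hd.2
          exact ⟨hu _ (by simp), h1⟩
    exact ih _ _ hx.1 hx.2 (hacc _ hd)

/-- The isomorphism invariant of the set of configurations accepting `v`. -/
noncomputable def key (A : AFMA Sigma S) (v : List Sigma) : Set S × (Set S → ℕ) :=
  ({s | ∃ θ, θ ∉ v ∧ θ ∉ A.Δ ∧ A.acc v (s, θ)},
   fun X => {θ | θ ∈ v ∧ θ ∉ A.Δ ∧ {s | A.acc v (s, θ)} = X}.ncard)

theorem key_map (A : AFMA Sigma S) {α : Equiv.Perm Sigma} (h : IsDeltaPerm A.Δ α)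
    (v : List Sigma) : A.key (v.map α) = A.key v := by
  have hm : ∀ θ, α θ ∈ v.map α ↔ θ ∈ v := fun θ => by simp
  unfold key
  congr 1
  · ext s
    constructor
    · rintro ⟨θ, h1, h2, h3⟩
      obtain ⟨θ, rfl⟩ := α.surjective θ
      rw [hm] at h1
      rw [mem_delta_iff h] at h2
      rw [acc_map A h] at h3
      exact ⟨θ, h1, h2, h3⟩
    · rintro ⟨θ, h1, h2, h3⟩
      exact ⟨α θ, by rwa [hm], by rwa [mem_delta_iff h], by rwa [acc_map A h]⟩
  · funext X
    rw [← Set.ncard_image_of_injective {θ | θ ∈ v ∧ θ ∉ A.Δ ∧ {s | A.acc v (s, θ)} = X} α.injective]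
    congr 1
    ext θ
    obtain ⟨θ, rfl⟩ := α.surjective θ
    rw [α.injective.mem_set_image]
    simp only [Set.mem_ofPred_eq, hm, mem_delta_iff h, acc_map A h]

theorem isDeltaPerm_swap [DecidableEq Sigma] {Δ : Finset Sigma} {x y : Sigma} (hx : x ∉ Δ)
    (hy : y ∉ Δ) : IsDeltaPerm Δ (Equiv.swap x y) := by
  intro δ hδ
  apply Equiv.swap_apply_of_ne_of_ne
  · rintro rfl; exact hx hδ
  · rintro rfl; exact hy hδ

theorem map_swap [DecidableEq Sigma] {v : List Sigma} {x y : Sigma} (hx : x ∉ v)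
    (hy : y ∉ v) : v.map (Equiv.swap x y) = v := by
  conv_rhs => rw [← List.map_id v]
  apply List.map_congr_left
  intro δ hδ
  apply Equiv.swap_apply_of_ne_of_ne
  · rintro rfl; exact hx hδ
  · rintro rfl; exact hy hδ

theorem acc_fresh (A : AFMA Sigma S) (v : List Sigma) (s : S) {x y : Sigma} (hx : x ∉ v)
    (hy : y ∉ v) (hx' : x ∉ A.Δ) (hy' : y ∉ A.Δ) (h : A.acc v (s, x)) : A.acc v (s, y) := by
  classical
  have := A.acc_map_aux (isDeltaPerm_swap hx' hy') _ _ _ h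
  rwa [map_swap hx hy, Equiv.swap_apply_left] at this

/-- A word is bad if no nonempty factor can be pumped for the key ordering. -/
def Bad (A : AFMA Sigma S) (v : List Sigma) : Prop :=
  ∀ x y z, v = x ++ y ++ z → y ≠ [] → ¬ A.key z ≤ A.key (y ++ z)

theorem Bad.suffix {A : AFMA Sigma S} {u v : List Sigma} (h : A.Bad (u ++ v)) : A.Bad v := by
  rintro x y z rfl hy
  exact h (u ++ x) y z (by simp) hy

theorem Bad.map {A : AFMA Sigma S} {v : List Sigma} (h : A.Bad v) {α : Equiv.Perm Sigma}
    (hα : IsDeltaPerm A.Δ α) : A.Bad (v.map α) := by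
  intro x y z hv hy
  have hv' : v = x.map ⇑α⁻¹ ++ y.map ⇑α⁻¹ ++ z.map ⇑α⁻¹ := by
    rw [← List.map_append, ← List.map_append, ← hv]
    simp [List.map_map, Function.comp_def]
  have := h _ _ _ hv' (by simpa using hy)
  rwa [← List.map_append, key_map A (IsDeltaPerm_inv hα), key_map A (IsDeltaPerm_inv hα)] at this

/-- Every bad word has length bounded by a constant. -/
theorem exists_bound [Infinite Sigma] [Fintype S] (A : AFMA Sigma S) :
    ∃ N, ∀ v, N ≤ v.length → ¬ A.Bad v := by
  classical
  by_contra! hcon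
  let P : List Sigma → Prop := fun v => ∀ n, ∃ u : List Sigma, n ≤ u.length ∧ A.Bad (u ++ v)
  have h0 : P [] := fun n => by simpa using hcon n
  have hstep : ∀ v, P v → ∃ σ, P (σ :: v) := by
    intro v hv
    obtain ⟨f, hf⟩ := Infinite.exists_notMem_finset (v.toFinset ∪ A.Δ)
    simp only [Finset.mem_union, List.mem_toFinset, not_or] at hf
    have key : ∀ n, ∃ σ : (insert f (v.toFinset ∪ A.Δ) : Finset Sigma), ∃ u : List Sigma,
        n ≤ u.length ∧ A.Bad (u ++ (σ : Sigma) :: v) := by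
      intro n
      obtain ⟨u, hu, hb⟩ := hv (n + 1)
      obtain ⟨u, σ, rfl⟩ : ∃ u' σ, u = u' ++ [σ] := by
        have hne : u ≠ [] := by rintro rfl; simp at hu
        exact ⟨_, _, (List.dropLast_append_getLast hne).symm⟩
      simp only [List.length_append, List.length_singleton, Nat.add_le_add_iff_right] at hu
      rw [List.append_assoc, List.singleton_append] at hb
      by_cases hσ : σ ∈ v.toFinset ∪ A.Δ
      · exact ⟨⟨σ, Finset.mem_insert_of_mem hσ⟩, u, hu, hb⟩
      · simp only [Finset.mem_union, List.mem_toFinset, not_or] at hσ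
        have := hb.map (isDeltaPerm_swap hσ.2 hf.2)
        rw [List.map_append, List.map_cons, map_swap hσ.1 hf.1, Equiv.swap_apply_left] at this
        exact ⟨⟨f, Finset.mem_insert_self _ _⟩, _, by simpa using hu, this⟩
    by_contra! hno
    have hno' : ∀ σ : (insert f (v.toFinset ∪ A.Δ) : Finset Sigma), ∃ n, ∀ u : List Sigma,
        n ≤ u.length → ¬ A.Bad (u ++ (σ : Sigma) :: v) := by
      intro σ
      have := hno σ
      simp only [P] at this
      push Not at this
      exact this
    choose n hn using hno'
    obtain ⟨σ, u, hu, hb⟩ := key (Finset.univ.sup n)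
    exact hn σ u (le_trans (Finset.le_sup (Finset.mem_univ σ)) hu) hb
  choose! g hg using hstep
  let seq : ℕ → List Sigma := fun n => Nat.rec [] (fun _ v => g v :: v) n
  have hs : ∀ n, seq (n + 1) = g (seq n) :: seq n := fun n => rfl
  have hP : ∀ n, P (seq n) := by
    intro n
    induction n with
    | zero => exact h0
    | succ n ih => rw [hs]; exact hg _ ih
  have hsuf : ∀ m k, ∃ y, seq (m + (k + 1)) = y ++ seq m ∧ y ≠ [] := by
    intro m k
    induction k with
    | zero => exact ⟨[g (seq m)], hs m, by simp⟩
    | succ k ih =>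
      obtain ⟨y, hy, -⟩ := ih
      refine ⟨g (seq (m + (k + 1))) :: y, ?_, by simp⟩
      rw [← add_assoc, hs, hy]
      rfl
  have := Finite.to_wellQuasiOrderedLE (α := Set S)
  obtain ⟨a, b, hab, hle⟩ := wellQuasiOrdered_le (α := Set S × (Set S → ℕ))
    (fun n => A.key (seq n))
  obtain ⟨k, rfl⟩ := Nat.exists_eq_add_of_lt hab
  obtain ⟨y, hy, hne⟩ := hsuf a k
  obtain ⟨u, -, hb⟩ := hP (a + (k + 1)) 0
  rw [← add_assoc] at hy
  simp only [hy] at hle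
  rw [← add_assoc, hy] at hb
  exact hb u y (seq a) (by simp) hne hle

/-- Extension of an injective partial map to a permutation. -/
theorem exists_perm_extending {T : Set Sigma} (hT : T.Countable) (hTc : Tᶜ.Infinite)
    (f : Sigma → Sigma) (hf : Set.InjOn f T) (hm : Set.MapsTo f T T) :
    ∃ β : Equiv.Perm Sigma, ∀ x ∈ T, β x = f x := by
  classical
  have hc : Cardinal.mk (f '' T)ᶜ.Elem = Cardinal.mk Tᶜ.Elem := by
    have h1 : (f '' T)ᶜ = Tᶜ ∪ (T \ f '' T) := by
      ext x
      have : x ∈ f '' T → x ∈ T := fun h => hm.image_subset h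
      simp only [Set.mem_compl_iff, Set.mem_union, Set.mem_sdiff]
      tauto
    rw [h1, Cardinal.mk_union_of_disjoint]
    · apply Cardinal.add_eq_left
      · exact Cardinal.infinite_iff.1 hTc.to_subtype
      · refine le_trans ?_ (Cardinal.infinite_iff.1 hTc.to_subtype)
        exact Cardinal.le_aleph0_iff_set_countable.2 (hT.mono Set.sdiff_subset)
    · exact Set.disjoint_left.2 fun x hx hx' => hx hx'.1
  obtain ⟨e2⟩ := Cardinal.eq.1 hc.symm
  let e1 : T ≃ (f '' T : Set Sigma) := Equiv.Set.imageOfInjOn f T hf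
  let β : Equiv.Perm Sigma :=
    (Equiv.Set.sumCompl T).symm.trans ((Equiv.sumCongr e1 e2).trans (Equiv.Set.sumCompl (f '' T)))
  refine ⟨β, fun x hx => ?_⟩
  simp [β, Equiv.Set.sumCompl_symm_apply_of_mem hx, e1, Equiv.Set.imageOfInjOn]

/-- A countable set containing a given finite set, infinite and coinfinite. -/
theorem exists_countable_coinfinite [Infinite Sigma] (T0 : Finset Sigma) :
    ∃ T : Set Sigma, ↑T0 ⊆ T ∧ T.Countable ∧ T.Infinite ∧ Tᶜ.Infinite := by
  let e := Infinite.natEmbedding Sigma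
  have h2 : Function.Injective fun n => e (2 * n) := fun a b h => by
    have := e.injective h; lia
  have h3 : Function.Injective fun n => e (2 * n + 1) := fun a b h => by
    have := e.injective h; lia
  refine ⟨↑T0 ∪ Set.range fun n => e (2 * n), Set.subset_union_left,
    T0.countable_toSet.union (Set.countable_range _),
    (Set.infinite_range_of_injective h2).mono Set.subset_union_right, ?_⟩
  have := (Set.infinite_range_of_injective h3).sdiff T0.finite_toSet
  refine this.mono ?_
  rintro x ⟨⟨n, rfl⟩, hx⟩ (h | ⟨m, hm⟩)
  · exact hx h
  · have := e.injective hm; lia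

/-- The matching of exceptional letters. -/
theorem exists_matching (A : AFMA Sigma S) [Infinite Sigma] (v u : List Sigma)
    (h : A.key v ≤ A.key u) : ∃ ι : Sigma → Sigma, Set.InjOn ι {θ | θ ∈ v ∧ θ ∉ A.Δ} ∧
      ∀ θ, θ ∈ v → θ ∉ A.Δ → ι θ ∈ u ∧ ι θ ∉ A.Δ ∧
        {s | A.acc u (s, ι θ)} = {s | A.acc v (s, θ)} := by
  have hfin : ∀ (v : List Sigma) X, {θ | θ ∈ v ∧ θ ∉ A.Δ ∧ {s | A.acc v (s, θ)} = X}.Finite :=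
    fun v X => (List.finite_toSet v).subset fun x hx => hx.1
  have : ∀ X : Set S, ∃ g : Sigma → Sigma,
      {θ | θ ∈ v ∧ θ ∉ A.Δ ∧ {s | A.acc v (s, θ)} = X} ⊆
        g ⁻¹' {θ | θ ∈ u ∧ θ ∉ A.Δ ∧ {s | A.acc u (s, θ)} = X} ∧
      Set.InjOn g {θ | θ ∈ v ∧ θ ∉ A.Δ ∧ {s | A.acc v (s, θ)} = X} := by
    intro X
    apply (hfin v X).exists_injOn_of_encard_le
    rw [← (hfin v X).cast_ncard_eq, ← (hfin u X).cast_ncard_eq]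
    exact_mod_cast h.2 X
  choose g hg1 hg2 using this
  have hι : ∀ θ, θ ∈ v → θ ∉ A.Δ → g {s | A.acc v (s, θ)} θ ∈ u ∧
      g {s | A.acc v (s, θ)} θ ∉ A.Δ ∧
        {s | A.acc u (s, g {s | A.acc v (s, θ)} θ)} = {s | A.acc v (s, θ)} :=
    fun θ h1 h2 => hg1 {s | A.acc v (s, θ)} ⟨h1, h2, rfl⟩
  refine ⟨fun θ => g {s | A.acc v (s, θ)} θ, ?_, hι⟩
  rintro x ⟨hx, hx'⟩ y ⟨hy, hy'⟩ hxy
  have h1 := (hι x hx hx').2.2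
  have h2 := (hι y hy hy').2.2
  simp only at hxy
  rw [hxy] at h1
  have h3 := h1.symm.trans h2
  rw [h3] at hxy
  exact hg2 _ ⟨hx, hx', h3⟩ ⟨hy, hy', rfl⟩ hxy

theorem exists_perm (A : AFMA Sigma S) [Infinite Sigma] (v u : List Sigma)
    (h : A.key v ≤ A.key u) (T0 : Finset Sigma) (hu : ∀ x ∈ u, x ∈ T0) (hΔ : A.Δ ⊆ T0) :
    ∃ (T : Set Sigma) (β : Equiv.Perm Sigma), ↑T0 ⊆ T ∧ IsDeltaPerm A.Δ β ∧
      (∀ θ ∈ T, β θ ∈ T) ∧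
      ∀ s, ∀ θ ∈ T, θ ∉ A.Δ → A.acc v (s, θ) → A.acc u (s, β θ) := by
  classical
  obtain ⟨T, hT0, hTc, hTi, hTci⟩ := exists_countable_coinfinite T0
  obtain ⟨ι, hι, hι'⟩ := A.exists_matching v u h
  have hinf : (T \ ↑T0).Infinite := hTi.sdiff T0.finite_toSet
  obtain ⟨c, hc⟩ := Set.countable_iff_exists_injOn.1 hTc
  let j : Sigma → Sigma := fun x => hinf.natEmbedding _ (c x)
  have hj : Set.InjOn j T := fun x hx y hy hxy =>
    hc hx hy ((hinf.natEmbedding _).injective (Subtype.ext hxy))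
  have hjT : ∀ x, j x ∈ T ∧ j x ∉ T0 := fun x => (hinf.natEmbedding _ (c x)).2
  let f : Sigma → Sigma := fun x => if x ∈ A.Δ then x else if x ∈ v then ι x else j x
  have f1 : ∀ x, x ∈ A.Δ → f x = x := fun x hx => by simp [f, hx]
  have f2 : ∀ x, x ∉ A.Δ → x ∈ v → f x = ι x := fun x hx hx' => by simp [f, hx, hx']
  have f3 : ∀ x, x ∉ A.Δ → x ∉ v → f x = j x := fun x hx hx' => by simp [f, hx, hx']
  have hfm : Set.MapsTo f T T := by
    intro x hx
    by_cases h1 : x ∈ A.Δ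
    · rwa [f1 x h1]
    · by_cases h2 : x ∈ v
      · rw [f2 x h1 h2]; exact hT0 (hu _ (hι' x h2 h1).1)
      · rw [f3 x h1 h2]; exact (hjT x).1
  have hfi : Set.InjOn f T := by
    intro x hx y hy hxy
    by_cases h1 : x ∈ A.Δ <;> by_cases h1' : y ∈ A.Δ
    · rwa [f1 x h1, f1 y h1'] at hxy
    · by_cases h2' : y ∈ v
      · rw [f1 x h1, f2 y h1' h2'] at hxy
        exact absurd (hxy ▸ h1) (hι' y h2' h1').2.1
      · rw [f1 x h1, f3 y h1' h2'] at hxy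
        exact absurd (hΔ (hxy ▸ h1)) (hjT y).2
    · by_cases h2 : x ∈ v
      · rw [f1 y h1', f2 x h1 h2] at hxy
        exact absurd (hxy ▸ h1') (hι' x h2 h1).2.1
      · rw [f1 y h1', f3 x h1 h2] at hxy
        exact absurd (hΔ (hxy ▸ h1')) (hjT x).2
    · by_cases h2 : x ∈ v <;> by_cases h2' : y ∈ v
      · rw [f2 x h1 h2, f2 y h1' h2'] at hxy
        exact hι ⟨h2, h1⟩ ⟨h2', h1'⟩ hxy
      · rw [f2 x h1 h2, f3 y h1' h2'] at hxy
        exact absurd (hxy ▸ hu _ (hι' x h2 h1).1) (hjT y).2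
      · rw [f3 x h1 h2, f2 y h1' h2'] at hxy
        exact absurd (hxy ▸ hu _ (hι' y h2' h1').1) (hjT x).2
      · rw [f3 x h1 h2, f3 y h1' h2'] at hxy
        exact hj hx hy hxy
  obtain ⟨β, hβ⟩ := exists_perm_extending hTc hTci f hfi hfm
  refine ⟨T, β, hT0, fun δ hδ => ?_, fun θ hθ => ?_, fun s θ hθ hθ' hacc => ?_⟩
  · rw [hβ δ (hT0 (hΔ hδ)), f1 δ hδ]
  · rw [hβ θ hθ]; exact hfm hθ
  · rw [hβ θ hθ]
    by_cases h2 : θ ∈ v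
    · rw [f2 θ hθ' h2]
      have := (hι' θ h2 hθ').2.2
      exact (Set.ext_iff.1 this s).2 hacc
    · rw [f3 θ hθ' h2]
      obtain ⟨x, hx, hx', hxacc⟩ := h.1 (show s ∈ (A.key v).1 from ⟨θ, h2, hθ', hacc⟩)
      exact A.acc_fresh u s hx (fun hh => (hjT θ).2 (hu _ hh)) hx'
        (fun hh => (hjT θ).2 (hΔ hh)) hxacc

/-- The pumped tail. -/
def tail (α : Equiv.Perm Sigma) (υ φ : List Sigma) : ℕ → List Sigma
  | 0 => φ
  | k + 1 => (υ ++ tail α υ φ k).map α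

theorem tail_eq (α : Equiv.Perm Sigma) (υ φ : List Sigma) (k : ℕ) :
    tail α υ φ k = ((List.range k).flatMap fun i => υ.map ⇑(α ^ (i + 1))) ++ φ.map ⇑(α ^ k) := by
  induction k with
  | zero => simp [tail]
  | succ k ih =>
    rw [tail, ih, List.range_succ_eq_map]
    simp [List.flatMap_map, List.map_flatMap, List.map_map, Function.comp_def, pow_succ']

end AFMA

/-- Pumping lemma for one-register alternating finite-memory automata: there is
a constant `N` such that every accepted word longer than `N` decomposes as
`τυφ` with `|υφ| ≤ N`, `|υ| > 0`, and a `Δ`-permutation `α` such that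
`τ υ α(υ) α²(υ) ⋯ α^k(υ) α^k(φ)` is accepted for every `k ≥ 1`. -/
theorem afma_pumping {Sigma S : Type} [Infinite Sigma] [Fintype S]
    (A : AFMA Sigma S) :
    ∃ N : ℕ, ∀ w ∈ A.Lang, N < w.length →
      ∃ (τ υ φ : List Sigma) (α : Equiv.Perm Sigma),
        w = τ ++ υ ++ φ ∧ IsDeltaPerm A.Δ α ∧
        (υ ++ φ).length ≤ N ∧ 0 < υ.length ∧
        ∀ k : ℕ, 1 ≤ k →
          τ ++ υ ++ ((List.range k).flatMap fun i => υ.map ⇑(α ^ (i + 1))) ++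
            φ.map ⇑(α ^ k) ∈ A.Lang := by
  classical
  obtain ⟨N, hN⟩ := A.exists_bound
  refine ⟨N, fun w hw hlen => ?_⟩
  have hb := hN (w.drop (w.length - N)) (by simp; lia)
  unfold AFMA.Bad at hb
  push Not at hb
  obtain ⟨x, υ, φ, hsplit, hne, hle⟩ := hb
  have hw' : w = (w.take (w.length - N) ++ x) ++ υ ++ φ := by
    conv_lhs => rw [← List.take_append_drop (w.length - N) w, hsplit]
    simp
  have hl : (υ ++ φ).length ≤ N := by
    have := congrArg List.length hsplit
    simp only [List.length_drop, List.length_append] at this ⊢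
    lia
  generalize w.take (w.length - N) ++ x = τ at hw'
  subst hw'
  obtain ⟨T, β, hT0, hβ, hβT, hacc⟩ := A.exists_perm φ (υ ++ φ) hle
    ((τ ++ υ ++ φ).toFinset ∪ A.Δ ∪ {A.θ0}) (by intro y hy; simp at hy ⊢; tauto)
    (by intro y hy; simp [hy])
  have hT : ∀ y ∈ τ ++ υ ++ φ, y ∈ T := fun y hy => hT0 (by simp at hy ⊢; tauto)
  have hθ : A.θ0 ∈ T := hT0 (by simp)
  have hα := AFMA.IsDeltaPerm_inv hβ
  refine ⟨τ, υ, φ, β⁻¹, rfl, hα, hl, List.length_pos_iff.2 hne, fun k _ => ?_⟩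
  have main : ∀ k, ∀ s, ∀ θ ∈ T, θ ∉ A.Δ → A.acc φ (s, θ) →
      A.acc (AFMA.tail β⁻¹ υ φ k) (s, θ) := by
    intro k
    induction k with
    | zero => intro s θ _ _ h; exact h
    | succ k ih =>
      intro s θ h1 h2 h3
      have h4 := A.acc_mono T _ _ ih υ (fun y hy => hT y (by simp [hy])) s (β θ) (hβT θ h1)
        (by rwa [AFMA.mem_delta_iff hβ]) (hacc s θ h1 h2 h3)
      have h5 := A.acc_map_aux hα _ _ _ h4
      rwa [show β⁻¹ (β θ) = θ from β.symm_apply_apply θ] at h5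
  rw [List.append_assoc, ← AFMA.tail_eq, A.mem_lang_iff]
  rw [A.mem_lang_iff] at hw
  exact A.acc_mono T _ _ (main k) (τ ++ υ) (fun y hy => hT y (by simp at hy ⊢; tauto)) _ _ hθ
    A.θ0_notin hw
end

section
/- Let A be a one-register alternating finite-memory automaton over an infinite alphabet Σ with distinguished letters Δ. Let σ = τυφ with |υ| > 0, and let C_0, C_{|τ|}, C_{|τυ|}, C_{|τυφ|} be finite sets of configurations with C_0 →τ C_{|τ|} →υ C_{|τυ|} →φ C_{|τυφ|}. Let α be a Δ-permutation of Σ and Σ′ ⊆ Σ be such that: C_{|τυ|}, α(Σ′) ⪯_α C_{|τ|}, Σ′; α(Σ′) ⊆ Σ′; and [υφ] ⊆ Σ′. Then there exist finite sets of configurations D and E such that C_{|τυ|} →α(υ) D →α(φ) E, with D, α(Σ′) ⪯_α C_{|τυ|}, Σ′ and E, α(Σ′) ⪯_α C_{|τυφ|}, Σ′. -/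
namespace AFMA

variable {Sigma S : Type}

/-- `Σ(C)` : the set of (non-distinguished) letters occurring in configurations of `C`. -/
def lettersOf (Δ : Finset Sigma) (C : Set (S × Sigma)) : Set Sigma :=
  {σ | σ ∉ Δ ∧ ∃ s, (s, σ) ∈ C}

/-- `S^σ(C)` : the states paired with the letter `σ` in `C`. -/
def statesAt (C : Set (S × Sigma)) (σ : Sigma) : Set S :=
  {s | (s, σ) ∈ C}

/-- `S^{Γ}(C)` : the states paired with some letter of `Γ` in `C`. -/
def statesOn (C : Set (S × Sigma)) (Γ : Set Sigma) : Set S :=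
  ⋃ σ ∈ Γ, statesAt C σ

/-- `Σ^Q(C)` : the letters `σ` with `S^σ(C) = Q`. -/
def lettersWith (C : Set (S × Sigma)) (Q : Set S) : Set Sigma :=
  {σ | statesAt C σ = Q}

/-- The relation `C1,Γ1 ⪯_α C2,Γ2`. -/
def Preceq (Δ : Finset Sigma) (α : Equiv.Perm Sigma)
    (C1 : Set (S × Sigma)) (Γ1 : Set Sigma)
    (C2 : Set (S × Sigma)) (Γ2 : Set Sigma) : Prop :=
  Γ1 ⊆ ⇑α '' Γ2 ∧
  (⇑α '' Γ2) ∩ lettersOf Δ C1 ⊆ Γ1 ∧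
  (∀ σ ∈ Γ1, statesAt C1 σ ⊆ statesAt C2 (α⁻¹ σ)) ∧
  statesOn C1 Γ1ᶜ ⊆ statesOn C2 Γ2ᶜ

end AFMA

/-- The `k`-fold pumping `τ υ α(υ) α²(υ) ⋯ α^k(υ) α^k(φ)` of the decomposition
`τ ++ υ ++ φ` by the permutation `α`. -/
def pumpedWord {Sigma : Type} (α : Equiv.Perm Sigma) (τ υ φ : List Sigma) (k : ℕ) :
    List Sigma :=
  τ ++ υ ++ ((List.range k).flatMap fun i => υ.map ⇑(α ^ (i + 1))) ++ φ.map ⇑(α ^ k)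

/-- The letters correspond. -/
def LRel {Sigma : Type} (α : Equiv.Perm Sigma) (Γ : Set Sigma) (x y : Sigma) : Prop :=
  (y ∈ Γ ∧ x = α y) ∨ (y ∉ Γ ∧ x ∉ ⇑α '' Γ)

/-- Pointwise reformulation of `Preceq` with `Γ1 = α(Γ)`. -/
def CRel {Sigma S : Type} (α : Equiv.Perm Sigma) (Γ : Set Sigma)
    (C' C : Set (S × Sigma)) : Prop :=
  ∀ s x, (s, x) ∈ C' → ∃ y, (s, y) ∈ C ∧ LRel α Γ x y

theorem preceq_iff_CRel {Sigma S : Type} (Δ : Finset Sigma) (α : Equiv.Perm Sigma)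
    (Γ : Set Sigma) (C' C : Set (S × Sigma)) :
    AFMA.Preceq Δ α C' (⇑α '' Γ) C Γ ↔ CRel α Γ C' C := by
  constructor
  · rintro ⟨-, -, h3, h4⟩ s x hx
    by_cases hxΓ : x ∈ ⇑α '' Γ
    · obtain ⟨y, hy, rfl⟩ := hxΓ
      have := h3 (α y) ⟨y, hy, rfl⟩ (a := s) hx
      refine ⟨y, ?_, Or.inl ⟨hy, rfl⟩⟩
      simpa [AFMA.statesAt] using this
    · have hs : s ∈ AFMA.statesOn C' (⇑α '' Γ)ᶜ := by
        simp only [AFMA.statesOn, Set.mem_iUnion]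
        exact ⟨x, hxΓ, hx⟩
      have := h4 hs
      simp only [AFMA.statesOn, Set.mem_iUnion] at this
      obtain ⟨y, hy, hyC⟩ := this
      exact ⟨y, hyC, Or.inr ⟨hy, hxΓ⟩⟩
  · intro h
    refine ⟨subset_rfl, Set.inter_subset_left, ?_, ?_⟩
    · rintro _ ⟨z, hz, rfl⟩ s hs
      obtain ⟨y, hy, ⟨_, h2⟩ | ⟨_, h2⟩⟩ := h s _ hs
      · have : z = y := α.injective h2
        subst this
        simpa [AFMA.statesAt] using hy
      · exact absurd ⟨z, hz, rfl⟩ h2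
    · intro s hs
      simp only [AFMA.statesOn, Set.mem_iUnion] at hs ⊢
      obtain ⟨x, hx, hxC⟩ := hs
      obtain ⟨y, hy, ⟨h1, h2⟩ | ⟨h1, _⟩⟩ := h s x hxC
      · exact absurd ⟨y, h1, h2.symm⟩ hx
      · exact ⟨y, h1, hy⟩

theorem muC_sim {Sigma S : Type} (A : AFMA Sigma S) (α : Equiv.Perm Sigma)
    (hα : IsDeltaPerm A.Δ α) (Γ : Set Sigma) (s : S) (x y σ : Sigma) (hσ : σ ∈ Γ)
    (hxy : LRel α Γ x y) (G : Set (S × Sigma)) (hG : G ∈ A.muC (s, y) σ) :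
    ∃ G' ∈ A.muC (s, x) (α σ), CRel α Γ G' G := by
  have hΔ : α σ ∈ A.Δ ↔ σ ∈ A.Δ := by
    constructor
    · intro h
      have := α.injective (hα _ h)
      rwa [this] at h
    · intro h
      rwa [hα _ h]
  have heq : α σ = x ↔ σ = y := by
    rcases hxy with ⟨_, rfl⟩ | ⟨h1, h2⟩
    · exact α.injective.eq_iff
    · constructor
      · rintro rfl
        exact absurd ⟨σ, hσ, rfl⟩ h2
      · rintro rfl
        exact absurd hσ h1
  unfold AFMA.muC at hG ⊢
  by_cases h1 : σ ∈ A.Δ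
  · rw [if_pos h1] at hG
    rw [if_pos (hΔ.2 h1)]
    obtain ⟨Q, hQ, rfl⟩ := hG
    refine ⟨_, ⟨Q, by rwa [hα _ h1], rfl⟩, ?_⟩
    rintro t z ⟨ht, rfl⟩
    exact ⟨y, ⟨ht, rfl⟩, hxy⟩
  · rw [if_neg h1] at hG
    rw [if_neg (fun h => h1 (hΔ.1 h))]
    by_cases h2 : σ = y
    · rw [if_pos h2] at hG
      rw [if_pos (heq.2 h2)]
      obtain ⟨Q, hQ, rfl⟩ := hG
      refine ⟨_, ⟨Q, hQ, rfl⟩, ?_⟩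
      rintro t z ⟨ht, rfl⟩
      exact ⟨y, ⟨ht, rfl⟩, hxy⟩
    · rw [if_neg h2] at hG
      rw [if_neg (fun h => h2 (heq.1 h))]
      obtain ⟨p, hp, rfl⟩ := hG
      refine ⟨_, ⟨p, hp, rfl⟩, ?_⟩
      rintro t z (⟨ht, rfl⟩ | ⟨ht, rfl⟩)
      · exact ⟨y, Or.inl ⟨ht, rfl⟩, hxy⟩
      · exact ⟨σ, Or.inr ⟨ht, rfl⟩, Or.inl ⟨hσ, rfl⟩⟩

theorem setStep_sim {Sigma S : Type} (A : AFMA Sigma S) (α : Equiv.Perm Sigma)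
    (hα : IsDeltaPerm A.Δ α) (Γ : Set Sigma) (C' C N : Set (S × Sigma)) (σ : Sigma)
    (hσ : σ ∈ Γ) (h : CRel α Γ C' C) (hs : A.SetStep C σ N) :
    ∃ N', A.SetStep C' (α σ) N' ∧ CRel α Γ N' N := by
  obtain ⟨g, hg, rfl⟩ := hs
  have key : ∀ c : S × Sigma, ∃ G' : Set (S × Sigma), c ∈ C' →
      G' ∈ A.muC c (α σ) ∧ CRel α Γ G' (⋃ c ∈ C, g c) := by
    rintro ⟨s, x⟩
    by_cases hc : (s, x) ∈ C'
    · obtain ⟨y, hy, hxy⟩ := h s x hc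
      obtain ⟨G', hG', hr⟩ := muC_sim A α hα Γ s x y σ hσ hxy _ (hg _ hy)
      refine ⟨G', fun _ => ⟨hG', fun t z hz => ?_⟩⟩
      obtain ⟨w, hw, hl⟩ := hr t z hz
      exact ⟨w, Set.mem_biUnion hy hw, hl⟩
    · exact ⟨∅, fun h => absurd h hc⟩
  choose g' hg' using key
  refine ⟨⋃ c ∈ C', g' c, ⟨g', fun c hc => (hg' c hc).1, rfl⟩, ?_⟩
  intro t z hz
  simp only [Set.mem_iUnion] at hz
  obtain ⟨c, hc, hz⟩ := hz
  exact (hg' c hc).2 t z hz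

theorem steps_sim {Sigma S : Type} (A : AFMA Sigma S) (α : Equiv.Perm Sigma)
    (hα : IsDeltaPerm A.Δ α) (Γ : Set Sigma) (C N : Set (S × Sigma)) (w : List Sigma)
    (hs : A.Steps C w N) : (∀ x ∈ w, x ∈ Γ) → ∀ C', CRel α Γ C' C →
    ∃ N', A.Steps C' (w.map ⇑α) N' ∧ CRel α Γ N' N := by
  induction hs with
  | nil C => exact fun _ C' h => ⟨C', .nil _, h⟩
  | cons h1 _ ih =>
    intro hw C' h
    obtain ⟨M, hM, hr⟩ := setStep_sim A α hα Γ C' _ _ _ (hw _ (by simp)) h h1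
    obtain ⟨N', hN, hr'⟩ := ih (fun x hx => hw x (by simp [hx])) M hr
    exact ⟨N', .cons hM hN, hr'⟩


/-- Proposition (sufficient condition), one step of pumping: under the hypotheses
`C_{|τυ|}, α(Γ) ⪯_α C_{|τ|}, Γ`, `α(Γ) ⊆ Γ`, `[υφ] ⊆ Γ`, there are configuration
sets `D`, `E` with `C_{|τυ|} →α(υ) D →α(φ) E`, `D, α(Γ) ⪯_α C_{|τυ|}, Γ` and
`E, α(Γ) ⪯_α C_{|τυφ|}, Γ`. -/
theorem afma_sufficient_one_step {Sigma S : Type} [Infinite Sigma] [Fintype S]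
    (A : AFMA Sigma S) (τ υ φ : List Sigma) (hυ : υ ≠ [])
    (C0 C1 C2 C3 : Set (S × Sigma))
    (hf0 : C0.Finite) (hf1 : C1.Finite) (hf2 : C2.Finite) (hf3 : C3.Finite)
    (hτ : A.Steps C0 τ C1) (hυs : A.Steps C1 υ C2) (hφ : A.Steps C2 φ C3)
    (α : Equiv.Perm Sigma) (hα : IsDeltaPerm A.Δ α) (Γ : Set Sigma)
    (hpre : AFMA.Preceq A.Δ α C2 (⇑α '' Γ) C1 Γ)
    (hsub : ⇑α '' Γ ⊆ Γ)
    (hletters : ∀ x ∈ υ ++ φ, x ∈ Γ) :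
    ∃ D E : Set (S × Sigma),
      A.Steps C2 (υ.map ⇑α) D ∧ A.Steps D (φ.map ⇑α) E ∧
      AFMA.Preceq A.Δ α D (⇑α '' Γ) C2 Γ ∧
      AFMA.Preceq A.Δ α E (⇑α '' Γ) C3 Γ := by
  rw [preceq_iff_CRel] at hpre
  obtain ⟨D, hD, hDr⟩ := steps_sim A α hα Γ C1 C2 υ hυs
    (fun x hx => hletters x (by simp [hx])) C2 hpre
  obtain ⟨E, hE, hEr⟩ := steps_sim A α hα Γ C2 C3 φ hφ
    (fun x hx => hletters x (by simp [hx])) D hDr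
  exact ⟨D, E, hD, hE, (preceq_iff_CRel ..).2 hDr, (preceq_iff_CRel ..).2 hEr⟩
end

section
/- Let A be a one-register alternating finite-memory automaton over an infinite alphabet Σ with distinguished letters Δ. Let σ = τυφ ∈ L(A) with |υ| > 0, let C_0, C_1, …, C_{|σ|} be an accepting run of A on σ, and let α be a Δ-permutation of Σ and Σ′ ⊆ Σ be such that C_{|τυ|}, α(Σ′) ⪯_α C_{|τ|}, Σ′, α(Σ′) ⊆ Σ′, and [υφ] ⊆ Σ′. Then for every k ≥ 1 the word τ υ α(υ) α²(υ) ⋯ α^k(υ) α^k(φ) belongs to L(A). -/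
namespace AFMA

variable {Sigma S : Type}

/-- Letterwise matching of register contents. -/
def Rel (α : Equiv.Perm Sigma) (Γ : Set Sigma) (x y : Sigma) : Prop :=
  (y ∈ Γ ∧ x = α y) ∨ (x ∉ ⇑α '' Γ ∧ y ∉ Γ)

/-- Every configuration of `C1` is matched by one of `C2`. -/
def Sim (α : Equiv.Perm Sigma) (Γ : Set Sigma) (C1 C2 : Set (S × Sigma)) : Prop :=
  ∀ c ∈ C1, ∃ d ∈ C2, c.1 = d.1 ∧ Rel α Γ c.2 d.2

theorem Rel.eq_iff {α : Equiv.Perm Sigma} {Γ : Set Sigma} {x y σ : Sigma}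
    (h : Rel α Γ x y) (hσ : σ ∈ Γ) : α σ = x ↔ σ = y := by
  rcases h with ⟨_, rfl⟩ | ⟨h1, h2⟩
  · simp
  · constructor
    · rintro rfl
      exact absurd ⟨σ, hσ, rfl⟩ h1
    · rintro rfl
      exact absurd hσ h2

theorem delta_iff {Δ : Finset Sigma} {α : Equiv.Perm Sigma} (hα : IsDeltaPerm Δ α) (σ : Sigma) :
    α σ ∈ Δ ↔ σ ∈ Δ := by
  constructor
  · intro h
    have := α.injective (hα _ h)
    rwa [this] at h
  · intro h
    rwa [hα _ h]

theorem sim_muC (A : AFMA Sigma S) {α : Equiv.Perm Sigma} (hα : IsDeltaPerm A.Δ α)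
    {Γ : Set Sigma} {c d : S × Sigma} (h1 : c.1 = d.1) (h2 : Rel α Γ c.2 d.2)
    {σ : Sigma} (hσ : σ ∈ Γ) {D : Set (S × Sigma)} (hD : D ∈ A.muC d σ) :
    ∃ E ∈ A.muC c (α σ), Sim α Γ E D := by
  unfold muC at hD ⊢
  have e1 := delta_iff hα σ
  have e2 := h2.eq_iff hσ
  rw [h1]
  by_cases hd : σ ∈ A.Δ
  · rw [if_pos hd] at hD
    rw [if_pos (e1.2 hd)]
    obtain ⟨Q, hQ, rfl⟩ := hD
    refine ⟨_, ⟨Q, by rwa [hα _ hd], rfl⟩, ?_⟩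
    rintro ⟨s, x⟩ ⟨hs, hx⟩
    obtain rfl : x = c.2 := hx
    exact ⟨(s, d.2), ⟨hs, rfl⟩, rfl, h2⟩
  by_cases he : σ = d.2
  · rw [if_neg hd, if_pos he] at hD
    rw [if_neg (mt e1.1 hd), if_pos (e2.2 he)]
    obtain ⟨Q, hQ, rfl⟩ := hD
    refine ⟨_, ⟨Q, hQ, rfl⟩, ?_⟩
    rintro ⟨s, x⟩ ⟨hs, hx⟩
    obtain rfl : x = c.2 := hx
    exact ⟨(s, d.2), ⟨hs, rfl⟩, rfl, h2⟩
  · rw [if_neg hd, if_neg he] at hD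
    rw [if_neg (mt e1.1 hd), if_neg (mt e2.1 he)]
    obtain ⟨p, hp, rfl⟩ := hD
    refine ⟨_, ⟨p, hp, rfl⟩, ?_⟩
    rintro ⟨s, x⟩ (⟨hs, hx⟩ | ⟨hs, hx⟩)
    · obtain rfl : x = c.2 := hx
      exact ⟨(s, d.2), Or.inl ⟨hs, rfl⟩, rfl, h2⟩
    · obtain rfl : x = α σ := hx
      exact ⟨(s, σ), Or.inr ⟨hs, rfl⟩, rfl, Or.inl ⟨hσ, rfl⟩⟩

theorem sim_step (A : AFMA Sigma S) {α : Equiv.Perm Sigma} (hα : IsDeltaPerm A.Δ α)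
    {Γ : Set Sigma} {C1 C2 C2' : Set (S × Sigma)} (h : Sim α Γ C1 C2)
    {σ : Sigma} (hσ : σ ∈ Γ) (hs : A.SetStep C2 σ C2') :
    ∃ C1', A.SetStep C1 (α σ) C1' ∧ Sim α Γ C1' C2' := by
  obtain ⟨g, hg, rfl⟩ := hs
  have key : ∀ c : S × Sigma, ∃ E : Set (S × Sigma), c ∈ C1 →
      E ∈ A.muC c (α σ) ∧ Sim α Γ E (⋃ d ∈ C2, g d) := by
    intro c
    by_cases hc : c ∈ C1
    · obtain ⟨d, hd, h1, h2⟩ := h c hc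
      obtain ⟨E, hE, hsim⟩ := sim_muC A hα h1 h2 hσ (hg d hd)
      refine ⟨E, fun _ => ⟨hE, fun e he => ?_⟩⟩
      obtain ⟨f, hf, hr⟩ := hsim e he
      exact ⟨f, Set.mem_biUnion hd hf, hr⟩
    · exact ⟨∅, fun h => absurd h hc⟩
  choose f hf using key
  refine ⟨⋃ c ∈ C1, f c, ⟨f, fun c hc => (hf c hc).1, rfl⟩, ?_⟩
  intro e he
  obtain ⟨c, hc, he⟩ := Set.mem_iUnion₂.1 he
  exact (hf c hc).2 e he

theorem sim_steps (A : AFMA Sigma S) {α : Equiv.Perm Sigma} (hα : IsDeltaPerm A.Δ α)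
    {Γ : Set Sigma} {C2 C2' : Set (S × Sigma)} {w : List Sigma} (hs : A.Steps C2 w C2') :
    ∀ {C1 : Set (S × Sigma)}, Sim α Γ C1 C2 → (∀ x ∈ w, x ∈ Γ) →
    ∃ C1', A.Steps C1 (w.map α) C1' ∧ Sim α Γ C1' C2' := by
  induction hs with
  | nil C => exact fun h _ => ⟨_, Steps.nil _, h⟩
  | cons h1 _ ih =>
    intro C1 h hw
    obtain ⟨D, hD, hsim⟩ := sim_step A hα h (hw _ (by simp)) h1
    obtain ⟨E, hE, hsim'⟩ := ih hsim (fun x hx => hw x (by simp [hx]))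
    exact ⟨E, Steps.cons hD hE, hsim'⟩

theorem Steps.append {A : AFMA Sigma S} {C D E : Set (S × Sigma)} {v w : List Sigma}
    (h : A.Steps C v D) (h' : A.Steps D w E) : A.Steps C (v ++ w) E := by
  induction h with
  | nil C => exact h'
  | cons h1 _ ih => exact Steps.cons h1 (ih h')

theorem steps_of_run (A : AFMA Sigma S) (w : List Sigma) : ∀ (Cs : ℕ → Set (S × Sigma)) (n : ℕ),
    (∀ i (h : i < w.length), A.SetStep (Cs (n + i)) (w.get ⟨i, h⟩) (Cs (n + i + 1))) →
    A.Steps (Cs n) w (Cs (n + w.length)) := by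
  induction w with
  | nil => exact fun Cs n _ => Steps.nil _
  | cons a w ih =>
    intro Cs n h
    refine Steps.cons (h 0 (by simp)) ?_
    have := ih Cs (n + 1) (fun i hi => by
      have := h (i + 1) (by simpa using hi)
      simpa [Nat.add_assoc, Nat.add_comm, Nat.add_left_comm] using this)
    simpa [Nat.add_assoc, Nat.add_comm, Nat.add_left_comm] using this

end AFMA

/-- Pumping from an accepting run satisfying the sufficient condition: if
`τυφ ∈ L(A)` via an accepting run `Cs` with
`C_{|τυ|}, α(Γ) ⪯_α C_{|τ|}, Γ`, `α(Γ) ⊆ Γ` and `[υφ] ⊆ Γ`, then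
`τ υ α(υ) α²(υ) ⋯ α^k(υ) α^k(φ) ∈ L(A)` for every `k ≥ 1`. -/
theorem afma_pumping_of_preceq {Sigma S : Type} [Infinite Sigma] [Fintype S]
    (A : AFMA Sigma S) (τ υ φ : List Sigma) (hυ : υ ≠ [])
    (Cs : ℕ → Set (S × Sigma))
    (h0 : Cs 0 = {(A.s0, A.θ0)})
    (hstep : ∀ i (h : i < (τ ++ υ ++ φ).length),
      A.SetStep (Cs i) ((τ ++ υ ++ φ).get ⟨i, h⟩) (Cs (i + 1)))
    (hacc : A.Accepting (Cs (τ ++ υ ++ φ).length))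
    (α : Equiv.Perm Sigma) (hα : IsDeltaPerm A.Δ α) (Γ : Set Sigma)
    (hpre : AFMA.Preceq A.Δ α (Cs (τ ++ υ).length) (⇑α '' Γ) (Cs τ.length) Γ)
    (hsub : ⇑α '' Γ ⊆ Γ)
    (hletters : ∀ x ∈ υ ++ φ, x ∈ Γ) :
    ∀ k : ℕ, 1 ≤ k → pumpedWord α τ υ φ k ∈ A.Lang := by
  have hτ : A.Steps (Cs 0) τ (Cs τ.length) := by
    have := AFMA.steps_of_run A τ Cs 0 (fun i hi => by
      have := hstep i (by simp; omega)
      simpa [List.getElem_append, hi] using this)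
    simpa using this
  have hυs : A.Steps (Cs τ.length) υ (Cs (τ ++ υ).length) := by
    have := AFMA.steps_of_run A υ Cs τ.length (fun i hi => by
      have := hstep (τ.length + i) (by simp; omega)
      simpa [List.getElem_append, hi] using this)
    simpa using this
  have hφs : A.Steps (Cs (τ ++ υ).length) φ (Cs (τ ++ υ ++ φ).length) := by
    have := AFMA.steps_of_run A φ Cs (τ ++ υ).length (fun i hi => by
      have := hstep ((τ ++ υ).length + i) (by simp; omega)
      rw [List.get_eq_getElem] at this ⊢
      rw [List.getElem_append_right (by simp)] at this
      simpa using this)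
    simpa [Nat.add_assoc] using this
  have hsim0 : AFMA.Sim α Γ (Cs (τ ++ υ).length) (Cs τ.length) := by
    obtain ⟨_, _, h3, h4⟩ := hpre
    rintro ⟨s, x⟩ hc
    by_cases hx : x ∈ ⇑α '' Γ
    · have h := h3 x hx hc
      obtain ⟨y, hy, rfl⟩ := hx
      refine ⟨(s, y), ?_, rfl, Or.inl ⟨hy, rfl⟩⟩
      simpa [AFMA.statesAt] using h
    · have h := h4 (Set.mem_biUnion (show x ∈ (⇑α '' Γ)ᶜ from hx) hc)
      obtain ⟨y, hy, hs⟩ := Set.mem_iUnion₂.1 h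
      exact ⟨(s, y), hs, rfl, Or.inr ⟨hx, hy⟩⟩
  have hpow : ∀ k : ℕ, ∀ x ∈ Γ, (α ^ k) x ∈ Γ := by
    intro k
    induction k with
    | zero => intro x hx; simpa using hx
    | succ k ih =>
      intro x hx
      rw [pow_succ', Equiv.Perm.mul_apply]
      exact hsub ⟨_, ih x hx, rfl⟩
  have hmap : ∀ (k : ℕ) (w : List Sigma), (w.map ⇑(α ^ k)).map ⇑α = w.map ⇑(α ^ (k + 1)) := by
    intro k w
    rw [List.map_map, pow_succ']
    rfl
  have hmem : ∀ (k : ℕ) (w : List Sigma), (∀ x ∈ w, x ∈ Γ) → ∀ x ∈ w.map ⇑(α ^ k), x ∈ Γ := by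
    intro k w hw x hx
    obtain ⟨y, hy, rfl⟩ := List.mem_map.1 hx
    exact hpow k y (hw y hy)
  have main : ∀ k : ℕ, ∃ D D' E, A.Steps {(A.s0, A.θ0)}
      (τ ++ υ ++ ((List.range k).flatMap fun i => υ.map ⇑(α ^ (i + 1)))) D' ∧
      A.Steps D (υ.map ⇑(α ^ k)) D' ∧ AFMA.Sim α Γ D' D ∧
      A.Steps D' (φ.map ⇑(α ^ k)) E ∧ A.Accepting E := by
    intro k
    induction k with
    | zero =>
      refine ⟨_, _, _, ?_, ?_, hsim0, ?_, hacc⟩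
      · rw [← h0]
        simpa using hτ.append hυs
      · simpa using hυs
      · simpa using hφs
    | succ k ih =>
      obtain ⟨D, D', E, h1, h2, h3, h4, h5⟩ := ih
      obtain ⟨D'', g1, g2⟩ := AFMA.sim_steps A hα h2 h3
        (hmem k υ (fun x hx => hletters x (by simp [hx])))
      obtain ⟨E', g3, g4⟩ := AFMA.sim_steps A hα h4 g2
        (hmem k φ (fun x hx => hletters x (by simp [hx])))
      rw [hmap] at g1 g3
      refine ⟨D', D'', E', ?_, g1, g2, g3, ?_⟩
      · rw [List.range_succ, List.flatMap_append, ← List.append_assoc]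
        simpa using h1.append g1
      · intro c hc
        obtain ⟨d, hd, he, _⟩ := g4 c hc
        rw [he]
        exact h5 d hd
  intro k _
  obtain ⟨D, D', E, h1, _, _, h4, h5⟩ := main k
  exact ⟨E, h1.append h4, h5⟩
end

section
/- Fix a finite set S. There exists a positive integer N such that every trace reversal resembling sequence over S of length greater than N is N-extendable; that is, for every sequence (Q_0,f_0), (Q_1,f_1), …, (Q_m,f_m) with m > N, where each Q_i ⊆ S and each f_i is a function from the nonempty subsets of S to {0,1,…,i}, there exist indices i < j < N with Q_i = Q_j and f_i(Q) ≤ f_j(Q) for every nonempty Q ⊆ S. -/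
theorem trace_reversal_extendable (S : Type) [Fintype S] :
    ∃ N : ℕ, 0 < N ∧
      ∀ (m : ℕ) (Q : ℕ → Set S) (f : ℕ → Set S → ℕ),
        N < m →
        (∀ i ≤ m, ∀ R : Set S, R.Nonempty → f i R ≤ i) →
        ∃ i j, i < j ∧ j < N ∧ Q i = Q j ∧
          ∀ R : Set S, R.Nonempty → f i R ≤ f j R := by
  by_contra hcon
  push Not at hcon
  have hcon' : ∀ n : ℕ, ∃ (m : ℕ) (Q : ℕ → Set S) (f : ℕ → Set S → ℕ), n + 1 < m ∧
      (∀ i ≤ m, ∀ R : Set S, R.Nonempty → f i R ≤ i) ∧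
      ∀ i j, i < j → j < n + 1 → Q i = Q j → ∃ R : Set S, R.Nonempty ∧ f j R < f i R :=
    fun n => hcon (n + 1) (Nat.succ_pos n)
  choose m Q f hm hf hbad using hcon'
  let g : (i : ℕ) → ℕ → Set S × (Set S → Fin (i + 1)) := fun i n =>
    (Q n i, fun R => ⟨min (f n i R) i, by omega⟩)
  have key : ∀ i, ∃ c, ∀ᶠ n in (Filter.hyperfilter ℕ : Filter ℕ), g i n = c := by
    intro i
    obtain ⟨c, hc⟩ := Ultrafilter.eq_pure_of_finite ((Filter.hyperfilter ℕ).map (g i))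
    refine ⟨c, ?_⟩
    have : ({c} : Set _) ∈ (Filter.hyperfilter ℕ).map (g i) := by
      rw [hc]; exact Ultrafilter.mem_pure.2 rfl
    exact this
  choose c hc using key
  have hw : WellQuasiOrdered (fun a b : Set S × (Set S → ℕ) => a.1 = b.1 ∧ a.2 ≤ b.2) :=
    (Finite.wellQuasiOrdered (· = ·)).prod (wellQuasiOrdered_le (α := Set S → ℕ))
  obtain ⟨i, j, hij, h1, h2⟩ := hw (fun i => ((c i).1, fun R => ((c i).2 R : ℕ)))
  have hgt : ∀ᶠ n in (Filter.hyperfilter ℕ : Filter ℕ), j ≤ n :=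
    Filter.Eventually.filter_mono Nat.hyperfilter_le_atTop (Filter.eventually_ge_atTop j)
  obtain ⟨n, ⟨hi, hj⟩, hn⟩ := (((hc i).and (hc j)).and hgt).exists
  have hmn := hm n
  rw [← hi, ← hj] at h1 h2
  obtain ⟨R, hR, hlt⟩ := hbad n i j hij (by omega) h1
  have h3 : min (f n i R) i ≤ min (f n j R) j := h2 R
  have h4 := hf n i (by omega) R hR
  have h5 := hf n j (by omega) R hR
  omega
end

section
/- Let A be a one-register alternating finite-memory automaton over an infinite alphabet Σ. Then the set |L(A)| = { |σ| : σ ∈ L(A) } of lengths of words accepted by A is semilinear. -/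
namespace AFMAProof

/-- An eventually self-reproducing predicate defines a semilinear set. -/
theorem semilinear_of_period (P : ℕ → Prop) (n p : ℕ) (hp : 0 < p)
    (h : ∀ k, n ≤ k → P k → P (k + p)) :
    ∃ T : Finset (ℕ × ℕ), {k | P k} = ⋃ q ∈ T, {k | ∃ i : ℕ, k = q.1 + i * q.2} := by
  classical
  let M : Set ℕ := {a | n ≤ a ∧ P a ∧ ∀ b, n ≤ b → P b → b < a → a % p ≠ b % p}
  have hM : M.Finite := by
    apply Set.Finite.of_finite_image (f := fun a => a % p)
    · apply (Set.finite_Iio p).subset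
      rintro _ ⟨a, -, rfl⟩
      exact Nat.mod_lt _ hp
    · intro a ha b hb hab
      rcases lt_trichotomy a b with hlt | heq | hlt
      · exact absurd hab.symm (hb.2.2 a ha.1 ha.2.1 hlt)
      · exact heq
      · exact absurd hab (ha.2.2 b hb.1 hb.2.1 hlt)
  have hadd : ∀ i a, n ≤ a → P a → P (a + i * p) := by
    intro i
    induction i with
    | zero => intro a _ hPa; simpa using hPa
    | succ i ih =>
      intro a ha hPa
      have := h (a + i * p) (by omega) (ih a ha hPa)
      rwa [Nat.succ_mul, ← Nat.add_assoc]
  refine ⟨((Finset.range n).filter P).image (fun a => (a, 0)) ∪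
    hM.toFinset.image (fun a => (a, p)), ?_⟩
  ext k
  simp only [Set.mem_setOf_eq, Set.mem_iUnion, Finset.mem_union, Finset.mem_image,
    Finset.mem_filter, Finset.mem_range, Set.Finite.mem_toFinset, exists_prop]
  constructor
  · intro hk
    by_cases hkn : k < n
    · exact ⟨(k, 0), Or.inl ⟨k, ⟨hkn, hk⟩, rfl⟩, 0, by simp⟩
    · push Not at hkn
      have hex : ∃ b, n ≤ b ∧ P b ∧ b % p = k % p := ⟨k, hkn, hk, rfl⟩
      let a := Nat.find hex
      obtain ⟨ha1, ha2, ha3⟩ : n ≤ a ∧ P a ∧ a % p = k % p := Nat.find_spec hex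
      have hmin : ∀ b, n ≤ b → P b → b % p = k % p → a ≤ b :=
        fun b h1 h2 h3 => Nat.find_min' hex ⟨h1, h2, h3⟩
      refine ⟨(a, p), Or.inr ⟨a, ⟨ha1, ha2, ?_⟩, rfl⟩, ?_⟩
      · intro b h1 h2 h3 h4
        have := hmin b h1 h2 (by rw [← h4, ha3])
        omega
      · have hle := hmin k hkn hk rfl
        have hd : p ∣ k - a := (Nat.modEq_iff_dvd' hle).1 ha3
        obtain ⟨i, hi⟩ := hd
        refine ⟨i, ?_⟩
        simp only
        rw [Nat.mul_comm i p, ← hi]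
        omega
  · rintro ⟨q, (⟨a, ⟨_, ha⟩, rfl⟩ | ⟨a, ha, rfl⟩), i, rfl⟩
    · simpa using ha
    · exact hadd i a ha.1 ha.2.1

/-- The set of natural vectors below an extended vector. -/
def below {ι : Type} (a : ι → ℕ∞) : Set (ι → ℕ) := {x | ∀ i, (x i : ℕ∞) ≤ a i}

/-- A nonempty directed lower set of natural vectors is of the form `below a`. -/
theorem ideal_eq_below {ι : Type} [Finite ι] (D : LowerSet (ι → ℕ))
    (hne : ∃ x, x ∈ D) (hdir : ∀ x ∈ D, ∀ y ∈ D, ∃ z ∈ D, x ≤ z ∧ y ≤ z) :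
    ∃ a : ι → ℕ∞, (D : Set (ι → ℕ)) = below a := by
  classical
  have := Fintype.ofFinite ι
  refine ⟨fun i => ⨆ x : {x // x ∈ D}, ((x.1 i : ℕ) : ℕ∞), ?_⟩
  ext x
  constructor
  · intro hx i
    exact le_iSup (fun x : {x // x ∈ D} => ((x.1 i : ℕ) : ℕ∞)) ⟨x, hx⟩
  · intro hx
    have h1 : ∀ i, ∃ y ∈ D, x i ≤ y i := by
      intro i
      by_contra hcon
      push Not at hcon
      obtain ⟨y0, hy0⟩ := hne
      have hpos := hcon y0 hy0
      have hle : (⨆ y : {y // y ∈ D}, ((y.1 i : ℕ) : ℕ∞)) ≤ ((x i - 1 : ℕ) : ℕ∞) := by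
        apply iSup_le
        rintro ⟨y, hy⟩
        have := hcon y hy
        exact_mod_cast (by omega : y i ≤ x i - 1)
      have h2 := (hx i).trans hle
      have h3 : x i ≤ x i - 1 := by exact_mod_cast h2
      omega
    have h2 : ∀ s : Finset ι, ∃ y ∈ D, ∀ i ∈ s, x i ≤ y i := by
      intro s
      induction s using Finset.induction_on with
      | empty => obtain ⟨y0, hy0⟩ := hne; exact ⟨y0, hy0, by simp⟩
      | insert i s _ ih =>
        obtain ⟨y, hy, hys⟩ := ih
        obtain ⟨z, hz, hzi⟩ := h1 i
        obtain ⟨w, hw, hyw, hzw⟩ := hdir y hy z hz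
        refine ⟨w, hw, ?_⟩
        intro j hj
        rcases Finset.mem_insert.1 hj with rfl | hj
        · exact hzi.trans (hzw _)
        · exact (hys j hj).trans (hyw _)
    obtain ⟨y, hy, hxy⟩ := h2 Finset.univ
    exact D.lower (fun i => hxy i (Finset.mem_univ i)) hy

/-- Lower sets of natural vectors are well-founded under inclusion. -/
theorem lowerSet_wf {ι : Type} [Finite ι] : WellFoundedLT (LowerSet (ι → ℕ)) := by
  rw [WellFoundedLT, isWellFounded_iff, RelEmbedding.wellFounded_iff_isEmpty]
  refine ⟨fun f => ?_⟩
  have hanti : ∀ m n, m < n → f n < f m := fun m n h => f.map_rel_iff.2 h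
  have hex : ∀ n, ∃ x, x ∈ f n ∧ x ∉ f (n + 1) := by
    intro n
    have := hanti n (n + 1) (Nat.lt_succ_self n)
    obtain ⟨x, hx, hx'⟩ := Set.exists_of_ssubset (LowerSet.coe_ssubset_coe.2 this)
    exact ⟨x, hx, hx'⟩
  choose x hx hx' using hex
  obtain ⟨m, n, hmn, hle⟩ := wellQuasiOrdered_le (α := ι → ℕ) x
  have h1 : x n ∈ f (m + 1) := by
    rcases (Nat.succ_le_of_lt hmn).eq_or_lt with h | h
    · have h' : m + 1 = n := h
      rw [h']; exact hx n
    · exact (hanti _ _ h).le (hx n)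
  exact hx' m ((f (m + 1)).lower hle h1)

/-- Every lower set of natural vectors is a finite union of sets `below a`. -/
theorem lowerSet_decomp {ι : Type} [Finite ι] (D : LowerSet (ι → ℕ)) :
    ∃ l : List (ι → ℕ∞), ∀ x, x ∈ D ↔ ∃ a ∈ l, x ∈ below a := by
  classical
  have hwf : WellFoundedLT (LowerSet (ι → ℕ)) := lowerSet_wf
  induction D using hwf.induction with
  | _ D ih =>
    by_cases hne : ∃ x, x ∈ D
    swap
    · push Not at hne
      exact ⟨[], fun x => by simp [hne x]⟩
    by_cases hdir : ∀ x ∈ D, ∀ y ∈ D, ∃ z ∈ D, x ≤ z ∧ y ≤ z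
    · obtain ⟨a, ha⟩ := ideal_eq_below D hne hdir
      refine ⟨[a], fun x => ?_⟩
      rw [← SetLike.mem_coe, ha]
      simp
    · push Not at hdir
      obtain ⟨x, hx, y, hy, hxy⟩ := hdir
      let E : (ι → ℕ) → LowerSet (ι → ℕ) := fun w =>
        ⟨{z | z ∈ D ∧ ¬ w ≤ z}, fun a b hba ha =>
          ⟨D.lower hba ha.1, fun hwb => ha.2 (hwb.trans hba)⟩⟩
      have hE : ∀ w z, z ∈ E w ↔ z ∈ D ∧ ¬ w ≤ z := fun w z => Iff.rfl
      have hlt : ∀ w ∈ D, E w < D := by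
        intro w hw
        refine lt_of_le_of_ne (fun z hz => hz.1) ?_
        intro heq
        have : w ∈ E w := heq ▸ hw
        exact this.2 le_rfl
      obtain ⟨l1, hl1⟩ := ih (E x) (hlt x hx)
      obtain ⟨l2, hl2⟩ := ih (E y) (hlt y hy)
      refine ⟨l1 ++ l2, fun z => ?_⟩
      have : z ∈ D ↔ z ∈ E x ∨ z ∈ E y := by
        rw [hE, hE]
        constructor
        · intro hz
          by_cases hxz : x ≤ z
          · exact Or.inr ⟨hz, hxy z hz hxz⟩
          · exact Or.inl ⟨hz, hxz⟩
        · rintro (h | h) <;> exact h.1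
      rw [this, hl1, hl2]
      simp only [List.mem_append, or_and_right, exists_or]

/-- Any sequence of lower sets of natural vectors has a weakly increasing pair. -/
theorem lowerSet_good {ι : Type} [Finite ι] (D : ℕ → LowerSet (ι → ℕ)) :
    ∃ m n, m < n ∧ D m ≤ D n := by
  choose l hl using fun n => lowerSet_decomp (D n)
  have hpwo : (Set.univ : Set (ι → ℕ∞)).PartiallyWellOrderedOn (· ≤ ·) :=
    Set.isPWO_of_wellQuasiOrderedLE _
  have hh := Set.PartiallyWellOrderedOn.partiallyWellOrderedOn_sublistForall₂ (· ≤ ·) hpwo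
  obtain ⟨m, n, hmn, hs⟩ := Set.partiallyWellOrderedOn_iff_exists_lt.1 hh l
    (fun n x _ => Set.mem_univ x)
  refine ⟨m, n, hmn, fun x hx => ?_⟩
  obtain ⟨a, ha, hxa⟩ := (hl m x).1 hx
  obtain ⟨l', hall, hsub⟩ := List.sublistForall₂_iff.1 hs
  have key : ∀ (l1 l2 : List (ι → ℕ∞)), List.Forall₂ (· ≤ ·) l1 l2 →
      ∀ a ∈ l1, ∃ b ∈ l2, a ≤ b := by
    intro l1 l2 hf
    induction hf with
    | nil => simp
    | cons hab _ ih =>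
      intro c hc
      rcases List.mem_cons.1 hc with rfl | hc
      · exact ⟨_, List.mem_cons_self, hab⟩
      · obtain ⟨b, hb, hcb⟩ := ih c hc
        exact ⟨b, List.mem_cons_of_mem _ hb, hcb⟩
  obtain ⟨b, hb, hab⟩ := key _ _ hall a ha
  exact (hl n x).2 ⟨b, hsub.subset hb, fun i => (hxa i).trans (hab i)⟩

variable {Sigma S : Type}

/-- `Acc A n C`: some word of length `n` is accepted from `C`. -/
def AccLen (A : AFMA Sigma S) : ℕ → Set (S × Sigma) → Prop
  | 0, C => A.Accepting C
  | n + 1, C => ∃ σ C', A.SetStep C σ C' ∧ AccLen A n C'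

theorem accLen_iff (A : AFMA Sigma S) (n : ℕ) (C : Set (S × Sigma)) :
    AccLen A n C ↔ ∃ w : List Sigma, w.length = n ∧ ∃ C', A.Steps C w C' ∧ A.Accepting C' := by
  induction n generalizing C with
  | zero =>
    constructor
    · intro h
      exact ⟨[], rfl, C, AFMA.Steps.nil C, h⟩
    · rintro ⟨w, hw, C', hs, ha⟩
      obtain rfl := List.length_eq_zero_iff.1 hw
      cases hs
      exact ha
  | succ n ih =>
    constructor
    · rintro ⟨σ, C1, h1, h2⟩
      obtain ⟨w, hw, C', hs, ha⟩ := (ih C1).1 h2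
      exact ⟨σ :: w, by simp [hw], C', AFMA.Steps.cons h1 hs, ha⟩
    · rintro ⟨w, hw, C', hs, ha⟩
      cases hs with
      | nil => simp at hw
      | cons h1 hs =>
        exact ⟨_, _, h1, (ih _).2 ⟨_, by simpa using hw, C', hs, ha⟩⟩

/-- Smaller configuration sets accept more lengths. -/
theorem accLen_mono (A : AFMA Sigma S) (n : ℕ) {C D : Set (S × Sigma)} (h : C ⊆ D)
    (hD : AccLen A n D) : AccLen A n C := by
  induction n generalizing C D with
  | zero => exact fun c hc => hD c (h hc)
  | succ n ih =>
    obtain ⟨σ, D', ⟨g, hg, rfl⟩, h2⟩ := hD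
    refine ⟨σ, ⋃ c ∈ C, g c, ⟨g, fun c hc => hg c (h hc), rfl⟩, ih ?_ h2⟩
    exact Set.biUnion_subset_biUnion_left h

theorem muC_perm (A : AFMA Sigma S) (α : Equiv.Perm Sigma) (hα : IsDeltaPerm A.Δ α)
    (c : S × Sigma) (σ : Sigma) (D : Set (S × Sigma)) (hD : D ∈ A.muC c σ) :
    AFMA.mapConfigs α D ∈ A.muC (c.1, α c.2) (α σ) := by
  have hmem : α σ ∈ A.Δ ↔ σ ∈ A.Δ := by
    constructor
    · intro h
      have h2 := hα _ h
      have h3 := α.injective h2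
      rwa [h3] at h
    · intro h
      rwa [hα _ h]
  have hprod : ∀ (Q : Set S) (θ : Sigma),
      AFMA.mapConfigs α (Q ×ˢ ({θ} : Set Sigma)) = Q ×ˢ ({α θ} : Set Sigma) := by
    intro Q θ
    ext ⟨s, x⟩
    simp only [AFMA.mapConfigs, Set.mem_image, Set.mem_prod, Set.mem_singleton_iff, Prod.exists,
      Prod.mk.injEq]
    constructor
    · rintro ⟨a, b, ⟨h1, rfl⟩, rfl, rfl⟩
      exact ⟨h1, rfl⟩
    · rintro ⟨h1, rfl⟩
      exact ⟨s, θ, ⟨h1, rfl⟩, rfl, rfl⟩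
  unfold AFMA.muC at hD ⊢
  by_cases h1 : σ ∈ A.Δ
  · rw [if_pos h1] at hD
    rw [if_pos (hmem.2 h1), hα _ h1]
    obtain ⟨Q, hQ, rfl⟩ := hD
    exact ⟨Q, hQ, hprod _ _⟩
  · rw [if_neg h1] at hD
    rw [if_neg (fun h => h1 (hmem.1 h))]
    by_cases h2 : σ = c.2
    · rw [if_pos h2] at hD
      rw [if_pos (by rw [h2])]
      obtain ⟨Q, hQ, rfl⟩ := hD
      exact ⟨Q, hQ, hprod _ _⟩
    · rw [if_neg h2] at hD
      rw [if_neg (fun h => h2 (α.injective h))]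
      obtain ⟨p, hp, rfl⟩ := hD
      refine ⟨p, hp, ?_⟩
      rw [← hprod, ← hprod]
      exact Set.image_union _ _ _

theorem mapConfigs_symm (α : Equiv.Perm Sigma) (C : Set (S × Sigma)) :
    AFMA.mapConfigs α.symm (AFMA.mapConfigs α C) = C := by
  simp [AFMA.mapConfigs, Set.image_image]

/-- Acceptance is invariant under `Δ`-permutations. -/
theorem accLen_perm (A : AFMA Sigma S) (α : Equiv.Perm Sigma) (hα : IsDeltaPerm A.Δ α)
    (n : ℕ) (C : Set (S × Sigma)) (h : AccLen A n C) :
    AccLen A n (AFMA.mapConfigs α C) := by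
  induction n generalizing C with
  | zero =>
    rintro _ ⟨c, hc, rfl⟩
    exact h c hc
  | succ n ih =>
    obtain ⟨σ, C', ⟨g, hg, rfl⟩, h2⟩ := h
    refine ⟨α σ, _, ?_, ih _ h2⟩
    refine ⟨fun c => AFMA.mapConfigs α (g (c.1, α.symm c.2)), ?_, ?_⟩
    · rintro _ ⟨c, hc, rfl⟩
      have := muC_perm A α hα c σ (g c) (hg c hc)
      simpa using this
    · unfold AFMA.mapConfigs
      rw [Set.biUnion_image, Set.image_iUnion₂]
      simp

theorem accLen_of_perm (A : AFMA Sigma S) (α : Equiv.Perm Sigma) (hα : IsDeltaPerm A.Δ α)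
    (n : ℕ) (C : Set (S × Sigma)) (h : AccLen A n (AFMA.mapConfigs α C)) :
    AccLen A n C := by
  have hα' : IsDeltaPerm A.Δ α.symm := fun δ hδ => by
    rw [Equiv.symm_apply_eq, hα δ hδ]
  have := accLen_perm A α.symm hα' n _ h
  rwa [mapConfigs_symm] at this

/-- Finite configuration sets with register contents outside `Δ`. -/
def Good (A : AFMA Sigma S) (C : Set (S × Sigma)) : Prop :=
  C.Finite ∧ ∀ c ∈ C, c.2 ∉ A.Δ

theorem good_step [Finite S] (A : AFMA Sigma S) {C C' : Set (S × Sigma)} {σ : Sigma}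
    (hC : Good A C) (h : A.SetStep C σ C') : Good A C' := by
  obtain ⟨g, hg, rfl⟩ := h
  have key : ∀ c ∈ C, Good A (g c) := by
    intro c hc
    have h1 := hg c hc
    have h2 := hC.2 c hc
    unfold AFMA.muC at h1
    split_ifs at h1 with h3 h4
    · obtain ⟨Q, _, h⟩ := h1
      rw [h]
      refine ⟨Q.toFinite.prod (Set.finite_singleton _), ?_⟩
      rintro ⟨s, x⟩ ⟨_, hx⟩
      obtain rfl : x = c.2 := hx
      exact h2
    · obtain ⟨Q, _, h⟩ := h1
      rw [h]
      refine ⟨Q.toFinite.prod (Set.finite_singleton _), ?_⟩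
      rintro ⟨s, x⟩ ⟨_, hx⟩
      obtain rfl : x = c.2 := hx
      exact h2
    · obtain ⟨p, _, h⟩ := h1
      rw [h]
      refine ⟨(p.1.toFinite.prod (Set.finite_singleton _)).union
        (p.2.toFinite.prod (Set.finite_singleton _)), ?_⟩
      rintro ⟨s, x⟩ (⟨_, hx⟩ | ⟨_, hx⟩)
      · obtain rfl : x = c.2 := hx
        exact h2
      · obtain rfl : x = σ := hx
        exact h3
  refine ⟨hC.1.biUnion fun c hc => (key c hc).1, ?_⟩
  intro d hd
  obtain ⟨c, hc, hdc⟩ := Set.mem_iUnion₂.1 hd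
  exact (key c hc).2 d hdc

/-- The states paired with the letter `θ` in `C`. -/
def sec (C : Set (S × Sigma)) (θ : Sigma) : Set S := {s | (s, θ) ∈ C}

open Classical in
/-- The number of letters with each given nonempty section. -/
noncomputable def cnt (C : Set (S × Sigma)) (Q : Set S) : ℕ :=
  if Q.Nonempty then {θ | sec C θ = Q}.ncard else 0

theorem finite_letters {C : Set (S × Sigma)} (hC : C.Finite) : {θ | (sec C θ).Nonempty}.Finite := by
  apply (hC.image Prod.snd).subset
  rintro θ ⟨s, hs⟩
  exact ⟨(s, θ), hs, rfl⟩

theorem exists_perm [Infinite Sigma] (A : AFMA Sigma S) {C D : Set (S × Sigma)}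
    (hC : Good A C) (hD : Good A D) (h : ∀ Q, cnt C Q ≤ cnt D Q) :
    ∃ α : Equiv.Perm Sigma, IsDeltaPerm A.Δ α ∧ AFMA.mapConfigs α C ⊆ D := by
  classical
  have hfin : ∀ (E : Set (S × Sigma)), Good A E → ∀ Q : Set S, Q.Nonempty →
      {θ | sec E θ = Q}.Finite := by
    intro E hE Q hQ
    apply (finite_letters hE.1).subset
    intro θ hθ
    have hθ' : sec E θ = Q := hθ
    show (sec E θ).Nonempty
    rwa [hθ']
  have hinj : ∀ Q : Set S, ∃ f : Sigma → Sigma, Q.Nonempty →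
      Set.MapsTo f {θ | sec C θ = Q} {θ | sec D θ = Q} ∧ Set.InjOn f {θ | sec C θ = Q} := by
    intro Q
    by_cases hQ : Q.Nonempty
    · have h1 := h Q
      simp only [cnt, if_pos hQ] at h1
      have h2 : {θ | sec C θ = Q}.encard ≤ {θ | sec D θ = Q}.encard := by
        rw [← (hfin C hC Q hQ).cast_ncard_eq, ← (hfin D hD Q hQ).cast_ncard_eq]
        exact_mod_cast h1
      obtain ⟨f, hf1, hf2⟩ := (hfin C hC Q hQ).exists_injOn_of_encard_le h2
      exact ⟨f, fun _ => ⟨fun x hx => hf1 hx, hf2⟩⟩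
    · exact ⟨id, fun h => absurd h hQ⟩
  choose f hf using hinj
  let P : Set Sigma := {θ | (sec C θ).Nonempty}
  let k : Sigma → Sigma := fun θ => if θ ∈ A.Δ then θ else f (sec C θ) θ
  have hk : ∀ θ ∈ P, θ ∉ A.Δ ∧ sec D (k θ) = sec C θ ∧ k θ ∉ A.Δ ∧ k θ = f (sec C θ) θ := by
    rintro θ hθ
    have hθ' : (sec C θ).Nonempty := hθ
    have h1 : θ ∉ A.Δ := by
      obtain ⟨s, hs⟩ := hθ'
      exact hC.2 _ hs
    have h2 : k θ = f (sec C θ) θ := if_neg h1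
    have h3 : sec D (k θ) = sec C θ := by
      rw [h2]
      exact (hf _ hθ').1 rfl
    refine ⟨h1, h3, ?_, h2⟩
    obtain ⟨s, hs⟩ := hθ'
    rw [← h3] at hs
    exact hD.2 _ hs
  have hkΔ : ∀ θ ∈ A.Δ, k θ = θ := fun θ hθ => if_pos hθ
  let R : Set Sigma := P ∪ A.Δ
  have hRfin : R.Finite := (finite_letters hC.1).union A.Δ.finite_toSet
  have hkinj : Set.InjOn k R := by
    rintro x (hx | hx) y (hy | hy) hxy
    · obtain ⟨_, hx2, _, hx4⟩ := hk x hx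
      obtain ⟨_, hy2, _, hy4⟩ := hk y hy
      have hs : sec C x = sec C y := by rw [← hx2, ← hy2, hxy]
      rw [hx4, hy4, ← hs] at hxy
      exact (hf _ hx).2 rfl hs.symm hxy
    · have h1 := (hk x hx).2.2.1
      rw [hxy, hkΔ y hy] at h1
      exact absurd hy h1
    · have h1 := (hk y hy).2.2.1
      rw [← hxy, hkΔ x hx] at h1
      exact absurd hx h1
    · rwa [hkΔ x hx, hkΔ y hy] at hxy
  have hcard : Cardinal.mk R < Cardinal.mk Sigma :=
    lt_of_lt_of_le (Cardinal.lt_aleph0_iff_set_finite.2 hRfin) (Cardinal.aleph0_le_mk Sigma)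
  obtain ⟨α, hα⟩ := Cardinal.extend_function_of_lt
    (⟨fun x : R => k x, fun x y hxy => Subtype.ext (hkinj x.2 y.2 hxy)⟩ : R ↪ Sigma) hcard
    ⟨Equiv.refl Sigma⟩
  have hα' : ∀ x ∈ R, α x = k x := fun x hx => hα ⟨x, hx⟩
  refine ⟨α, ?_, ?_⟩
  · intro δ hδ
    rw [hα' δ (Or.inr hδ), hkΔ δ hδ]
  · rintro _ ⟨⟨s, θ⟩, hc, rfl⟩
    have hθ : θ ∈ P := ⟨s, hc⟩
    have h1 := (hk θ hθ).2.1
    have h2 : s ∈ sec C θ := hc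
    rw [← h1, ← hα' θ (Or.inl hθ)] at h2
    exact h2

end AFMAProof

/-- Semi-linearity of lengths: the set of lengths of words accepted by a
one-register alternating finite-memory automaton is a finite union of linear
sets `{a + i·b : i ∈ ℕ}`. -/
theorem afma_lengths_semilinear {Sigma S : Type} [Infinite Sigma] [Fintype S]
    (A : AFMA Sigma S) :
    ∃ T : Finset (ℕ × ℕ),
      {n | ∃ w ∈ A.Lang, w.length = n} =
        ⋃ p ∈ T, {n | ∃ i : ℕ, n = p.1 + i * p.2} := by
  classical
  -- lower sets of counting vectors of good configuration sets accepting length `n`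
  let D : ℕ → LowerSet (Set S → ℕ) := fun n =>
    ⟨{v | ∃ C, AFMAProof.Good A C ∧ v ≤ AFMAProof.cnt C ∧ AFMAProof.AccLen A n C},
      fun a b hba hC => by
        obtain ⟨C, h1, h2, h3⟩ := hC
        exact ⟨C, h1, hba.trans h2, h3⟩⟩
  obtain ⟨m, n, hmn, hle⟩ := AFMAProof.lowerSet_good D
  have hbase : ∀ C, AFMAProof.Good A C → AFMAProof.AccLen A m C → AFMAProof.AccLen A n C := by
    intro C hC h
    obtain ⟨C', hC', h2, h3⟩ := hle (show AFMAProof.cnt C ∈ D m from ⟨C, hC, le_rfl, h⟩)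
    obtain ⟨α, hα, hsub⟩ := AFMAProof.exists_perm A hC hC' h2
    exact AFMAProof.accLen_of_perm A α hα n C (AFMAProof.accLen_mono A n hsub h3)
  have hstep : ∀ k C, AFMAProof.Good A C → AFMAProof.AccLen A (m + k) C →
      AFMAProof.AccLen A (n + k) C := by
    intro k
    induction k with
    | zero => exact hbase
    | succ k ih =>
      rintro C hC ⟨σ, C', h1, h2⟩
      exact ⟨σ, C', h1, ih C' (AFMAProof.good_step A hC h1) h2⟩
  have hgood : AFMAProof.Good A {(A.s0, A.θ0)} := by
    refine ⟨Set.finite_singleton _, ?_⟩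
    rintro _ rfl
    exact A.θ0_notin
  obtain ⟨T, hT⟩ := AFMAProof.semilinear_of_period
    (fun k => AFMAProof.AccLen A k {(A.s0, A.θ0)}) m (n - m) (by omega) (by
      intro k hk h
      have := hstep (k - m) _ hgood (by rwa [Nat.add_sub_cancel' hk])
      rwa [show n + (k - m) = k + (n - m) by omega] at this)
  refine ⟨T, ?_⟩
  rw [← hT]
  ext k
  rw [Set.mem_setOf_eq, Set.mem_setOf_eq, AFMAProof.accLen_iff]
  constructor
  · rintro ⟨w, hw, hl⟩
    exact ⟨w, hl, hw⟩
  · rintro ⟨w, hl, hw⟩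
    exact ⟨w, hw, hl⟩
end
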